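/- arXiv:1805.09552 — 2 statements merged into one kernel-verified Lean document; each statement's English description precedes it below -/
import Mathlib

section
/- Let p : I × I → [0,∞) satisfy hypotheses (H1), (H2), (H3) and (H4). Fix z ∈ I, q ∈ (0,1), C > 0, and let b be a q-perturbation of p on Δ_z. Then there exists a constant C₂ > 0, depending only on q, S, δ₀, K, λ and C, such that for every x ∈ Δ_z and all s,t ∈ Δ_x: the series defining the Green kernel G_{b,Δ_x}(s,t) of the restriction of b to Δ_x × Δ_x converges absolutely, and |G_{b,Δ_x}(s,t) − G_{p,Δ_x}(s,t)| ≤ C₂·q^{|x|}·G_{p,Δ_x}(s,t). (Lemma 4.4 of the paper.) -/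
open scoped ENNReal

namespace Paper

/-- Words in the two letters `α, β`: the free monoid on two generators, as `List Bool`.
The head of the list is the leftmost letter. -/
abbrev Word := List Bool

/-- Length of the longest common prefix of two lists. -/
def lcpLen : List Bool → List Bool → ℕ
  | a :: s, b :: t => if a = b then lcpLen s t + 1 else 0
  | _, _ => 0

/-- Length of the longest common suffix of two words. -/
def lcsLen (s t : Word) : ℕ := lcpLen s.reverse t.reverse

/-- The tree metric on `Word`: `d(s,t) = (|s| - k) + (|t| - k)`, `k` the length of the
longest common suffix. -/
def treeDist (s t : Word) : ℕ := (s.length - lcsLen s t) + (t.length - lcsLen s t)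

/-- The branch `Δ_x = {u x : u ∈ I}` of words having `x` as a suffix. -/
def Delta (x : Word) : Set Word := {s | x <:+ s}

/-- The geodesic segment `[s,t] = {v : d(s,v) + d(v,t) = d(s,t)}`. -/
def geodesic (s t : Word) : Set Word := {v | treeDist s v + treeDist v t = treeDist s t}

/-- Paths of `n` steps from `s` to `t` staying in `Ω`. -/
def pathSet {X : Type*} (Ω : Set X) (n : ℕ) (s t : X) : Set (Fin (n + 1) → X) :=
  {σ | σ 0 = s ∧ σ (Fin.last n) = t ∧ ∀ i, σ i ∈ Ω}

/-- The weight `∏ a(s_i, s_{i+1})` of a path, as an extended nonnegative real. -/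
noncomputable def weightE {X : Type*} (a : X → X → ℝ) (n : ℕ) (σ : Fin (n + 1) → X) : ℝ≥0∞ :=
  ∏ i : Fin n, ENNReal.ofReal (a (σ i.castSucc) (σ i.succ))

/-- The `n`-step kernel `a⁽ⁿ⁾(s,t)` of the kernel `a` on `Ω`, with values in `[0,∞]`. -/
noncomputable def nStepE {X : Type*} (Ω : Set X) (a : X → X → ℝ) (n : ℕ) (s t : X) : ℝ≥0∞ :=
  ∑' σ : pathSet Ω n s t, weightE a n σ.1

/-- The Green kernel `G_a(s,t) = Σ_n a⁽ⁿ⁾(s,t)` of `a` on `Ω`, with values in `[0,∞]`. -/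
noncomputable def greenE {X : Type*} (Ω : Set X) (a : X → X → ℝ) (s t : X) : ℝ≥0∞ :=
  ∑' n : ℕ, nStepE Ω a n s t

/-- The weight of a path, real version (for signed kernels). -/
noncomputable def weightR {X : Type*} (a : X → X → ℝ) (n : ℕ) (σ : Fin (n + 1) → X) : ℝ :=
  ∏ i : Fin n, a (σ i.castSucc) (σ i.succ)

/-- The `n`-step kernel of a signed kernel `a` on `Ω`. -/
noncomputable def nStepR {X : Type*} (Ω : Set X) (a : X → X → ℝ) (n : ℕ) (s t : X) : ℝ :=
  ∑' σ : pathSet Ω n s t, weightR a n σ.1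

/-- The Green kernel of a signed kernel `a` on `Ω`, as a real number. -/
noncomputable def greenR {X : Type*} (Ω : Set X) (a : X → X → ℝ) (s t : X) : ℝ :=
  ∑' n : ℕ, nStepR Ω a n s t

/-- The Green kernel of `|a|`: finiteness of this expresses absolute convergence of the
series defining the Green kernel of `a`. -/
noncomputable def greenAbs {X : Type*} (Ω : Set X) (a : X → X → ℝ) (s t : X) : ℝ≥0∞ :=
  greenE Ω (fun u v => |a u v|) s t

/-- (H1): finite range `S`. -/
def H1 (p : Word → Word → ℝ) (S : ℕ) : Prop := ∀ s t, S < treeDist s t → p s t = 0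

/-- (H2): nonzero transition probabilities are bounded below by `δ₀`. -/
def H2 (p : Word → Word → ℝ) (δ₀ : ℝ) : Prop := ∀ s t, 0 < p s t → δ₀ ≤ p s t

/-- (H3): uniform irreducibility. -/
def H3 (p : Word → Word → ℝ) (δ₀ : ℝ) (K : ℕ) : Prop :=
  ∀ s t, treeDist s t = 1 → ∃ k ≤ K, ∃ u : ℕ → Word, u 0 = s ∧ u k = t ∧
    ∀ i < k, ∀ x : Word, δ₀ ≤ p (u i ++ x) (u (i + 1) ++ x)

/-- The operator `(Pf)(s) = Σ_t p(s,t) f(t)` extends to a bounded operator of norm at most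
`lam` on `ℓ²(X, m)`, expressed via the associated bilinear form on finitely supported
functions. -/
def opNormBound {X : Type*} (m : X → ℝ) (p : X → X → ℝ) (lam : ℝ) : Prop :=
  ∀ f g : X → ℝ, (Function.support f).Finite → (Function.support g).Finite →
    |∑' s, m s * g s * ∑' t, p s t * f t| ≤
      lam * Real.sqrt (∑' x, m x * f x ^ 2) * Real.sqrt (∑' x, m x * g x ^ 2)

/-- (H4): there is a weight `m` for which `P` is bounded of norm at most `lam` on `ℓ²(I,m)`. -/
def H4 (p : Word → Word → ℝ) (m : Word → ℝ) (lam : ℝ) : Prop :=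
  (∀ x, 0 < m x) ∧ opNormBound m p lam

/-- Substochasticity: `Σ_t p(s,t) ≤ 1` for every `s`. -/
def Substochastic (p : Word → Word → ℝ) : Prop :=
  ∀ s, (∑' t, ENNReal.ofReal (p s t)) ≤ 1

/-- `b` is a `q`-perturbation of `p` on `Δ_z` (with constant `C`). -/
def Perturb (p b : Word → Word → ℝ) (z : Word) (q C : ℝ) : Prop :=
  ∀ s t, s ∈ Delta z → t ∈ Delta z →
    |b s t| ≤ p s t ∧ |b s t - p s t| ≤ C * q ^ s.length

/-- The word `ω|k = ω(k-1) ω(k-2) ⋯ ω(0)` of length `k` determined by an end `ω`. -/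
def endWord (ω : ℕ → Bool) (k : ℕ) : Word := (List.range k).reverse.map ω

/-- The last-entrance kernel `M_p(s,u)`: sum over paths from `s` to `u` of length at least
one whose second-to-last point lies outside `Δ_x`. -/
noncomputable def lastEnter (p : Word → Word → ℝ) (x s u : Word) : ℝ≥0∞ :=
  ∑' m : ℕ, ∑' σ : {σ : Fin (m + 2) → Word //
      σ ∈ pathSet Set.univ (m + 1) s u ∧ σ ((Fin.last m).castSucc) ∉ Delta x},
    weightE p (m + 1) σ.1

/-- The quantum integer `[n]_q = (q⁻ⁿ - qⁿ)/(q⁻¹ - q)`. -/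
noncomputable def qInt (q : ℝ) (n : ℕ) : ℝ := (q ^ (-(n : ℤ)) - q ^ (n : ℤ)) / (q⁻¹ - q)

/-- The lengths of the blocks in the canonical factorization of a word into maximal
alternating subwords. -/
def blockLens : Word → List ℕ
  | [] => []
  | [_] => [1]
  | a :: b :: rest =>
    match blockLens (b :: rest) with
    | [] => [1]
    | k :: ks => if a = b then 1 :: (k :: ks) else (k + 1) :: ks

/-- The quantum dimension `dim_q(x) = Π_i [|x_i| + 1]_q` over the blocks of `x`. -/
noncomputable def dimq (q : ℝ) (x : Word) : ℝ := ((blockLens x).map fun L => qInt q (L + 1)).prod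

/-- The classical dimension `dim(x) = Π_i (|x_i| + 1)` over the blocks of `x`. -/
noncomputable def dimn (x : Word) : ℝ := ((blockLens x).map fun L => (L + 1 : ℝ)).prod

/-- The involution `x ↦ x̄`: reverse the word and exchange the two letters. -/
def bar (x : Word) : Word := (x.map fun a => !a).reverse

/-- The fusion multiplicity `mᵗ_{r,s}`: the number of words `z` such that `r = r₀ z`,
`s = z̄ s₀`, `t = r₀ s₀` for some `r₀, s₀`. -/
noncomputable def fuse (r s t : Word) : ℕ :=
  {z : Word | ∃ r₀ s₀ : Word, r = r₀ ++ z ∧ s = bar z ++ s₀ ∧ t = r₀ ++ s₀}.ncard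

/-- A finitely supported probability measure on `Word`. -/
def IsProbMeasure (μ : Word → ℝ) : Prop :=
  (∀ x, 0 ≤ μ x) ∧ (Function.support μ).Finite ∧ ∑' x, μ x = 1

/-- The transition kernel `p_μ(s,t) = Σ_r μ(r) mᵗ_{r,s} dim_q(t)/(dim_q(r) dim_q(s))`. -/
noncomputable def pMu (q : ℝ) (μ : Word → ℝ) (s t : Word) : ℝ :=
  ∑' r, μ r * (fuse r s t : ℝ) * dimq q t / (dimq q r * dimq q s)

/-- The `q`-binomial coefficient. -/
noncomputable def qbinom (q : ℝ) (n k : ℕ) : ℝ :=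
  q ^ (-((k * (n - k) : ℕ) : ℤ)) *
    ∏ i ∈ Finset.range k, (1 - q ^ (2 * (n - i))) / (1 - q ^ (2 * (k - i)))

/-!
By the resolvent identity, `G_b - G_p` is at most `∑ᵤ (C/δ₀) q^|u| G_p(s,u) G_p(u,t)`. Let `v` be
the longest suffix of `u` that is also a suffix of `s` or of `t`. If `v ≠ u`, a path between `u` and
`s` or `t` crosses the boundary of the branch next to `v` towards `u`, which by the finite range has
boundedly many vertices, all at bounded distance from `v`. Hence Ancona's inequality
`G(s,u) G(u,t) ≤ c G(s,v) G(v,t) · G(v,u) G(u,v)`, while `G(s,v) G(v,t) ≤ G(v,v) G(s,t)`. The sum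
over `u` of `G(v,u) G(u,v) = ∑ₙ (n+1) p⁽ⁿ⁾(v,v)` is at most `(1-λ)⁻²` because `p⁽ⁿ⁾(v,v) ≤ λⁿ`,
and the sum of `q^|v|` over the suffixes `v` of `s` or `t` in `Δ_x` is at most `2 q^|x| / (1-q)`.
-/

section Green

variable {X : Type*}

open scoped Classical in
/-- The powers of a kernel, viewed as an infinite matrix. The sums are unconditional ones, so over
`ℝ` an entry is meaningful only where they converge. -/
noncomputable def kernelPow {R : Type*} [Semiring R] [TopologicalSpace R] (P : X → X → R) :
    ℕ → X → X → R
  | 0, s, t => if s = t then 1 else 0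
  | n + 1, s, t => ∑' u, P s u * kernelPow P n u t

/-- The Green kernel `∑ₙ Pⁿ` of a nonnegative kernel on the whole space. -/
noncomputable def green (P : X → X → ℝ≥0∞) (s t : X) : ℝ≥0∞ := ∑' n, kernelPow P n s t

variable {P : X → X → ℝ≥0∞}

lemma kernelPow_zero_of_ne {s t : X} (h : s ≠ t) : kernelPow P 0 s t = 0 := if_neg h

lemma tsum_kernelPow_zero_mul (h : X → ℝ≥0∞) (s : X) : ∑' u, kernelPow P 0 s u * h u = h s := by
  rw [tsum_eq_single s fun u hu => by rw [kernelPow_zero_of_ne hu.symm, zero_mul]]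
  simp [kernelPow]

lemma kernelPow_add (n k : ℕ) (s t : X) :
    kernelPow P (n + k) s t = ∑' u, kernelPow P n s u * kernelPow P k u t := by
  induction n generalizing s with
  | zero => rw [zero_add, tsum_kernelPow_zero_mul]
  | succ n ih =>
    rw [Nat.succ_add]
    simp only [kernelPow, ih, ← ENNReal.tsum_mul_left, ← ENNReal.tsum_mul_right, mul_assoc]
    exact ENNReal.tsum_comm

lemma kernelPow_mul_kernelPow_le (n k : ℕ) (s u t : X) :
    kernelPow P n s u * kernelPow P k u t ≤ kernelPow P (n + k) s t := by
  rw [kernelPow_add]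
  exact ENNReal.le_tsum (f := fun u => kernelPow P n s u * kernelPow P k u t) u

lemma pow_le_kernelPow {δ : ℝ≥0∞} {k : ℕ} {w : ℕ → X} (h : ∀ i < k, δ ≤ P (w i) (w (i + 1))) :
    δ ^ k ≤ kernelPow P k (w 0) (w k) := by
  induction k generalizing w with
  | zero => simp [kernelPow]
  | succ k ih =>
    have htail := ih (w := fun i => w (i + 1)) fun i hi => h (i + 1) (by lia)
    rw [pow_succ']
    exact (mul_le_mul' (h 0 k.succ_pos) htail).trans
      (ENNReal.le_tsum (f := fun u => P (w 0) u * kernelPow P k u (w (k + 1))) (w 1))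

lemma sum_range_succ_kernelPow (N : ℕ) (s t : X) :
    ∑ n ∈ Finset.range (N + 1), kernelPow P n s t =
      kernelPow P 0 s t + ∑' u, P s u * ∑ n ∈ Finset.range N, kernelPow P n u t := by
  simp_rw [Finset.sum_range_succ', add_comm _ (kernelPow P 0 s t), Finset.mul_sum]
  rw [Summable.tsum_finsetSum fun _ _ => ENNReal.summable]
  rfl

lemma kernelPow_le_green (n : ℕ) (s t : X) : kernelPow P n s t ≤ green P s t := ENNReal.le_tsum n

lemma one_le_green_self (s : X) : 1 ≤ green P s s := by
  simpa [kernelPow] using kernelPow_le_green (P := P) 0 s s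

lemma green_eq (s t : X) : green P s t = kernelPow P 0 s t + ∑' u, P s u * green P u t := by
  simp_rw [green, ← ENNReal.tsum_mul_left]
  rw [tsum_eq_zero_add' ENNReal.summable, ENNReal.tsum_comm]
  rfl

lemma tsum_mul_green_le (s t : X) : ∑' u, P s u * green P u t ≤ green P s t := by
  rw [green_eq s t]
  exact le_add_self

lemma tsum_mul_sum_green_mul_le (B : Finset X) (h : X → ℝ≥0∞) (s : X) :
    ∑' w, P s w * ∑ y ∈ B, green P w y * h y ≤ ∑ y ∈ B, green P s y * h y := by
  simp_rw [Finset.mul_sum, ← mul_assoc]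
  rw [Summable.tsum_finsetSum fun _ _ => ENNReal.summable]
  simp_rw [ENNReal.tsum_mul_right]
  gcongr
  exact tsum_mul_green_le _ _

lemma tsum_green_mul_eq (h : X → ℝ≥0∞) (s : X) :
    ∑' u, green P s u * h u = h s + ∑' w, P s w * ∑' u, green P w u * h u := by
  simp_rw [green_eq s, add_mul]
  rw [ENNReal.tsum_add, tsum_kernelPow_zero_mul]
  simp_rw [← ENNReal.tsum_mul_left, ← ENNReal.tsum_mul_right, mul_assoc]
  rw [ENNReal.tsum_comm]

lemma tsum_green_mul_green_le {r : ℝ≥0∞} {v : X} (h : ∀ n, kernelPow P n v v ≤ r ^ n) :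
    ∑' u, green P v u * green P u v ≤ (1 - r)⁻¹ ^ 2 := by
  have expand : ∑' u, green P v u * green P u v = ∑' (n) (k), kernelPow P (n + k) v v := by
    simp_rw [kernelPow_add, green, ← ENNReal.tsum_mul_left, ← ENNReal.tsum_mul_right]
    rw [ENNReal.tsum_comm]
    conv_rhs => rw [ENNReal.tsum_comm]
    exact tsum_congr fun k => ENNReal.tsum_comm
  calc ∑' u, green P v u * green P u v = ∑' (n) (k), kernelPow P (n + k) v v := expand
    _ ≤ ∑' (n) (k), r ^ n * r ^ k := by
      gcongr with n k
      rw [← pow_add]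
      exact h (n + k)
    _ = (1 - r)⁻¹ ^ 2 := by
      simp_rw [ENNReal.tsum_mul_left, ENNReal.tsum_mul_right, ENNReal.tsum_geometric, sq]

/-- The domination principle: the bound only has to be checked at `t` and where `f` fails to be
superharmonic relative to `E`. -/
lemma mul_green_le_of_superharmonicOn {E : Set X} {c : ℝ≥0∞} {f : X → ℝ≥0∞} {t : X}
    (h : ∀ w ∈ E, c * green P w t ≤ f w ∨
      w ≠ t ∧ (∀ w', P w w' ≠ 0 → w' ∈ E) ∧ ∑' w', P w w' * f w' ≤ f w) {s : X} (hs : s ∈ E) :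
    c * green P s t ≤ f s := by
  have partial_le (N : ℕ) : ∀ w ∈ E, c * ∑ n ∈ Finset.range N, kernelPow P n w t ≤ f w := by
    induction N with
    | zero => simp
    | succ N ih =>
      intro w hw
      rcases h w hw with hle | ⟨hne, hE, hsuper⟩
      · exact le_trans (by gcongr; exact ENNReal.sum_le_tsum _) hle
      · rw [sum_range_succ_kernelPow, kernelPow_zero_of_ne hne, zero_add, ← ENNReal.tsum_mul_left]
        refine (ENNReal.tsum_le_tsum fun w' => ?_).trans hsuper
        by_cases hw' : P w w' = 0
        · simp [hw']
        · rw [mul_left_comm]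
          gcongr
          exact ih w' (hE w' hw')
  rw [green, ← ENNReal.tsum_mul_left]
  refine ENNReal.tsum_le_of_sum_range_le fun N => ?_
  rw [← Finset.mul_sum]
  exact partial_le N s hs

lemma green_mul_green_le (s v t : X) :
    green P s v * green P v t ≤ green P v v * green P s t := by
  rw [mul_comm]
  refine mul_green_le_of_superharmonicOn (E := Set.univ) (f := fun w => green P v v * green P w t)
    (fun w _ => ?_) (Set.mem_univ s)
  rcases eq_or_ne w v with rfl | hne
  · exact .inl (mul_comm _ _).le
  · refine .inr ⟨hne, fun _ _ => Set.mem_univ _, ?_⟩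
    simp_rw [mul_left_comm (P w _), ENNReal.tsum_mul_left]
    gcongr
    exact tsum_mul_green_le w t

lemma green_le_div_mul_right {M ε : ℝ≥0∞} (hε : ε ≠ 0) (hε' : ε ≠ ⊤) {y v : X}
    (hy : green P y y ≤ M) (h : ε ≤ green P y v) (s : X) :
    green P s y ≤ M / ε * green P s v := by
  rw [ENNReal.mul_comm_div, ← mul_div_assoc, ENNReal.le_div_iff_mul_le (.inl hε) (.inl hε')]
  calc green P s y * ε ≤ green P s y * green P y v := by gcongr
    _ ≤ green P y y * green P s v := green_mul_green_le s y v
    _ ≤ M * green P s v := by gcongr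

lemma green_le_div_mul_left {M ε : ℝ≥0∞} (hε : ε ≠ 0) (hε' : ε ≠ ⊤) {y v : X}
    (hy : green P y y ≤ M) (h : ε ≤ green P v y) (t : X) :
    green P y t ≤ M / ε * green P v t := by
  rw [ENNReal.mul_comm_div, ← mul_div_assoc, ENNReal.le_div_iff_mul_le (.inl hε) (.inl hε')]
  calc green P y t * ε ≤ green P v y * green P y t := by rw [mul_comm]; gcongr
    _ ≤ green P y y * green P v t := green_mul_green_le v y t
    _ ≤ M * green P v t := by gcongr

lemma green_le_sum_green_mul_green {B : Finset X} {y : X} (hy : y ∈ B) (t : X) :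
    green P y t ≤ ∑ v ∈ B, green P y v * green P v t :=
  (le_mul_of_one_le_left zero_le (one_le_green_self y)).trans <|
    Finset.single_le_sum (f := fun v => green P y v * green P v t) (fun _ _ => zero_le) hy

lemma green_le_sum_of_forall_entrance_mem {D : Set X} {B : Finset X}
    (hB : ∀ w ∉ D, ∀ w' ∈ D, P w w' ≠ 0 → w' ∈ B) {s t : X} (hs : s ∉ D) (ht : t ∈ D) :
    green P s t ≤ ∑ y ∈ B, green P s y * green P y t := by
  rw [← one_mul (green P s t)]
  refine mul_green_le_of_superharmonicOn (E := Dᶜ ∪ B)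
    (f := fun w => ∑ y ∈ B, green P w y * green P y t) (fun w hw => ?_) (.inl hs)
  rcases hw with hw | hw
  · refine .inr ⟨fun hwt => hw (hwt ▸ ht), fun w' hw' => ?_, tsum_mul_sum_green_mul_le B _ w⟩
    by_cases hD : w' ∈ D
    · exact .inr (hB w hw w' hD hw')
    · exact .inl hD
  · exact .inl ((one_mul _).trans_le (green_le_sum_green_mul_green hw t))

lemma green_le_sum_of_forall_exit_mem {D : Set X} {B : Finset X}
    (hB : ∀ w ∈ D, ∀ w' ∉ D, P w w' ≠ 0 → w ∈ B) {s t : X} (hs : s ∈ D) (ht : t ∉ D) :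
    green P s t ≤ ∑ y ∈ B, green P s y * green P y t := by
  rw [← one_mul (green P s t)]
  refine mul_green_le_of_superharmonicOn (E := D)
    (f := fun w => ∑ y ∈ B, green P w y * green P y t) (fun w hw => ?_) hs
  by_cases hwB : w ∈ B
  · exact .inl ((one_mul _).trans_le (green_le_sum_green_mul_green hwB t))
  · refine .inr ⟨fun hwt => ht (hwt ▸ hw), fun w' hw' => ?_, tsum_mul_sum_green_mul_le B _ w⟩
    by_contra hD
    exact hwB (hB w hw w' hD hw')

lemma sum_green_mul_green_le {M ε : ℝ≥0∞} (hε : ε ≠ 0) (hε' : ε ≠ ⊤) {B : Finset X} {v : X}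
    (hM : ∀ y ∈ B, green P y y ≤ M) (hB : ∀ y ∈ B, ε ≤ green P y v ∧ ε ≤ green P v y) (s t : X) :
    ∑ y ∈ B, green P s y * green P y t ≤
      B.card * (M / ε) ^ 2 * (green P s v * green P v t) := by
  calc ∑ y ∈ B, green P s y * green P y t
      ≤ ∑ _ ∈ B, (M / ε * green P s v) * (M / ε * green P v t) :=
        Finset.sum_le_sum fun y hy => mul_le_mul'
          (green_le_div_mul_right hε hε' (hM y hy) (hB y hy).1 s)
          (green_le_div_mul_left hε hε' (hM y hy) (hB y hy).2 t)
    _ = B.card * (M / ε) ^ 2 * (green P s v * green P v t) := by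
      rw [Finset.sum_const, nsmul_eq_mul]
      ring

end Green

section Perturbation

variable {X : Type*} {P : X → X → ℝ≥0∞} {a b : X → X → ℝ}

lemma enorm_kernelPow_le (ha : ∀ u v, ‖a u v‖ₑ ≤ P u v) (n : ℕ) (s t : X) :
    ‖kernelPow a n s t‖ₑ ≤ kernelPow P n s t := by
  induction n generalizing s with
  | zero =>
    unfold kernelPow
    split_ifs <;> simp
  | succ n ih =>
    refine enorm_tsum_le_tsum_enorm.trans (ENNReal.tsum_le_tsum fun u => ?_)
    rw [enorm_mul]
    exact mul_le_mul' (ha s u) (ih u)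

lemma summable_mul_kernelPow (ha : ∀ u v, ‖a u v‖ₑ ≤ P u v) {n : ℕ} {s t : X}
    (hP : kernelPow P (n + 1) s t ≠ ⊤) : Summable fun u => a s u * kernelPow a n u t := by
  refine .of_enorm (ne_top_of_le_ne_top hP (ENNReal.tsum_le_tsum fun u => ?_))
  rw [enorm_mul]
  exact mul_le_mul' (ha s u) (enorm_kernelPow_le ha n u t)

lemma enorm_kernelPow_succ_sub_le (ha : ∀ u v, ‖a u v‖ₑ ≤ P u v) (hb : ∀ u v, ‖b u v‖ₑ ≤ P u v)
    {n : ℕ} {s t : X} (hP : kernelPow P (n + 1) s t ≠ ⊤) :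
    ‖kernelPow b (n + 1) s t - kernelPow a (n + 1) s t‖ₑ ≤
      ∑' u, (‖b s u - a s u‖ₑ * kernelPow P n u t +
        P s u * ‖kernelPow b n u t - kernelPow a n u t‖ₑ) := by
  simp only [kernelPow]
  rw [← (summable_mul_kernelPow hb hP).tsum_sub (summable_mul_kernelPow ha hP)]
  refine enorm_tsum_le_tsum_enorm.trans (ENNReal.tsum_le_tsum fun u => ?_)
  have split : b s u * kernelPow b n u t - a s u * kernelPow a n u t =
      (b s u - a s u) * kernelPow a n u t +
        b s u * (kernelPow b n u t - kernelPow a n u t) := by ring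
  rw [split]
  refine (enorm_add_le _ _).trans ?_
  rw [enorm_mul, enorm_mul]
  gcongr
  · exact enorm_kernelPow_le ha n u t
  · exact hb s u

/-- The first-order bound coming from the resolvent identity `G_b - G_a = G_b (b - a) G_a`. -/
lemma tsum_enorm_kernelPow_sub_le (ha : ∀ u v, ‖a u v‖ₑ ≤ P u v) (hb : ∀ u v, ‖b u v‖ₑ ≤ P u v)
    (hP : ∀ s t, green P s t ≠ ⊤) (s t : X) :
    ∑' n, ‖kernelPow b n s t - kernelPow a n s t‖ₑ ≤
      ∑' u, green P s u * ∑' v, ‖b u v - a u v‖ₑ * green P v t := by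
  set h : X → ℝ≥0∞ := fun u => ∑' v, ‖b u v - a u v‖ₑ * green P v t
  have partial_le (N : ℕ) (s : X) :
      ∑ n ∈ Finset.range N, ‖kernelPow b n s t - kernelPow a n s t‖ₑ ≤
        ∑' u, green P s u * h u := by
    induction N generalizing s with
    | zero => simp
    | succ N ih =>
      calc ∑ n ∈ Finset.range (N + 1), ‖kernelPow b n s t - kernelPow a n s t‖ₑ
          = ∑ n ∈ Finset.range N, ‖kernelPow b (n + 1) s t - kernelPow a (n + 1) s t‖ₑ := by
            simp [Finset.sum_range_succ', kernelPow]
        _ ≤ ∑ n ∈ Finset.range N, ∑' u, (‖b s u - a s u‖ₑ * kernelPow P n u t +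
              P s u * ‖kernelPow b n u t - kernelPow a n u t‖ₑ) := by
            gcongr with n
            exact enorm_kernelPow_succ_sub_le ha hb
              (ne_top_of_le_ne_top (hP s t) (kernelPow_le_green _ _ _))
        _ = ∑' u, (‖b s u - a s u‖ₑ * ∑ n ∈ Finset.range N, kernelPow P n u t +
              P s u * ∑ n ∈ Finset.range N, ‖kernelPow b n u t - kernelPow a n u t‖ₑ) := by
            rw [← Summable.tsum_finsetSum fun _ _ => ENNReal.summable]
            simp_rw [Finset.sum_add_distrib, Finset.mul_sum]
        _ ≤ ∑' u, (‖b s u - a s u‖ₑ * green P u t + P s u * ∑' v, green P u v * h v) := by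
            gcongr with u
            · exact ENNReal.sum_le_tsum _
            · exact ih u
        _ = ∑' u, green P s u * h u := by rw [ENNReal.tsum_add, tsum_green_mul_eq]
  exact ENNReal.tsum_le_of_sum_range_le fun N => partial_le N s

lemma summable_kernelPow (ha : ∀ u v, ‖a u v‖ₑ ≤ P u v) {s t : X} (hP : green P s t ≠ ⊤) :
    Summable fun n => kernelPow a n s t :=
  .of_enorm (ne_top_of_le_ne_top hP (ENNReal.tsum_le_tsum fun n => enorm_kernelPow_le ha n s t))

lemma enorm_tsum_kernelPow_sub_le (ha : ∀ u v, ‖a u v‖ₑ ≤ P u v) (hb : ∀ u v, ‖b u v‖ₑ ≤ P u v)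
    (hP : ∀ s t, green P s t ≠ ⊤) {h : X → ℝ≥0∞} (hab : ∀ u v, ‖b u v - a u v‖ₑ ≤ h u * P u v)
    (s t : X) :
    ‖∑' n, kernelPow b n s t - ∑' n, kernelPow a n s t‖ₑ ≤
      ∑' u, h u * (green P s u * green P u t) := by
  rw [← (summable_kernelPow hb (hP s t)).tsum_sub (summable_kernelPow ha (hP s t))]
  refine enorm_tsum_le_tsum_enorm.trans ((tsum_enorm_kernelPow_sub_le ha hb hP s t).trans ?_)
  refine ENNReal.tsum_le_tsum fun u => ?_
  calc green P s u * ∑' v, ‖b u v - a u v‖ₑ * green P v t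
      ≤ green P s u * ∑' v, h u * (P u v * green P v t) := by
        refine mul_le_mul' le_rfl (ENNReal.tsum_le_tsum fun v => ?_)
        rw [← mul_assoc]
        exact mul_le_mul' (hab u v) le_rfl
    _ ≤ green P s u * (h u * green P u t) := by
        rw [ENNReal.tsum_mul_left]
        gcongr
        exact tsum_mul_green_le u t
    _ = h u * (green P s u * green P u t) := mul_left_comm _ _ _

end Perturbation

section Spectral

variable {X : Type*} {m : X → ℝ} {p : X → X → ℝ} {lam : ℝ}

lemma opNormBound.comp_injective {Y : Type*} (h : opNormBound m p lam) {g : Y → X}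
    (hg : g.Injective) : opNormBound (m ∘ g) (fun s t => p (g s) (g t)) lam := by
  intro f f' hf hf'
  have support_extend (φ : Y → ℝ) :
      (Function.extend g φ 0).support ⊆ g '' φ.support := by
    intro x hx
    by_cases hxg : ∃ y, g y = x
    · obtain ⟨y, rfl⟩ := hxg
      exact ⟨y, by rwa [Function.mem_support, hg.extend_apply] at hx, rfl⟩
    · exact absurd (Function.extend_apply' _ _ _ hxg) hx
  have tsum_eq (φ : Y → ℝ) (F : X → ℝ)
      (hF : ∀ x, Function.extend g φ 0 x = 0 → F x = 0) : ∑' x, F x = ∑' y, F (g y) :=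
    (hg.tsum_eq fun x hx =>
      Set.image_subset_range _ _ (support_extend φ (mt (hF x) hx))).symm
  have bound := h _ _ ((hf.image g).subset (support_extend f))
    ((hf'.image g).subset (support_extend f'))
  rw [tsum_eq f' _ (by simp +contextual), tsum_eq f _ (by simp +contextual),
    tsum_eq f' _ (by simp +contextual)] at bound
  simp_rw [tsum_eq f (fun t => p _ t * Function.extend g f 0 t) (by simp +contextual),
    hg.extend_apply] at bound
  exact bound

/-- The norm of `ℓ²(X, m)`, on functions for which the defining sum converges. -/
noncomputable def weightedNorm (m f : X → ℝ) : ℝ := √(∑' x, m x * f x ^ 2)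

lemma weightedNorm_kernel_le (h : opNormBound m p lam) (hm : ∀ x, 0 ≤ m x) (hlam : 0 ≤ lam)
    {f : X → ℝ} (hf : f.support.Finite)
    (hpf : (Function.support fun s => ∑' t, p s t * f t).Finite) :
    weightedNorm m (fun s => ∑' t, p s t * f t) ≤ lam * weightedNorm m f := by
  set g : X → ℝ := fun s => ∑' t, p s t * f t
  have hg : 0 ≤ ∑' x, m x * g x ^ 2 := tsum_nonneg fun x => mul_nonneg (hm x) (sq_nonneg _)
  have hsq : weightedNorm m g * weightedNorm m g ≤
      lam * weightedNorm m f * weightedNorm m g := by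
    refine le_trans ?_ (h f g hf hpf)
    rw [weightedNorm, Real.mul_self_sqrt hg]
    refine le_trans (le_of_eq ?_) (le_abs_self _)
    exact tsum_congr fun s => by rw [sq, mul_assoc]
  rcases (Real.sqrt_nonneg (∑' x, m x * g x ^ 2)).eq_or_lt with h0 | hpos
  · rw [weightedNorm, ← h0]
    exact mul_nonneg hlam (Real.sqrt_nonneg _)
  · exact le_of_mul_le_mul_right hsq hpos

lemma sqrt_mul_abs_le_weightedNorm (hm : ∀ x, 0 ≤ m x) {f : X → ℝ} (hf : f.support.Finite)
    (x : X) : √(m x) * |f x| ≤ weightedNorm m f := by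
  have hsum : Summable fun x => m x * f x ^ 2 :=
    summable_of_hasFiniteSupport (hf.subset fun x hx hfx => hx (by simp [hfx]))
  rw [← Real.sqrt_sq_eq_abs, ← Real.sqrt_mul (hm x)]
  exact Real.sqrt_le_sqrt (hsum.le_tsum x fun y _ => mul_nonneg (hm y) (sq_nonneg _))

lemma finite_support_kernelPow (hcol : ∀ t, {s | p s t ≠ 0}.Finite) (n : ℕ) (t : X) :
    (Function.support fun s => kernelPow p n s t).Finite := by
  induction n with
  | zero =>
    exact (Set.finite_singleton t).subset fun s hs => by_contra fun hst => hs (if_neg hst)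
  | succ n ih =>
    refine (ih.biUnion fun u _ => hcol u).subset fun s hs => ?_
    obtain ⟨u, hu⟩ : ∃ u, p s u * kernelPow p n u t ≠ 0 := by
      by_contra! hzero
      exact hs (by simp [kernelPow, hzero])
    exact Set.mem_biUnion (right_ne_zero_of_mul hu) (left_ne_zero_of_mul hu)

lemma kernelPow_nonneg (hp : ∀ s t, 0 ≤ p s t) (n : ℕ) (s t : X) : 0 ≤ kernelPow p n s t := by
  induction n generalizing s with
  | zero =>
    unfold kernelPow
    split_ifs <;> simp
  | succ n ih => exact tsum_nonneg fun u => mul_nonneg (hp s u) (ih u)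

lemma kernelPow_ofReal (hp : ∀ s t, 0 ≤ p s t) (hcol : ∀ t, {s | p s t ≠ 0}.Finite) (n : ℕ)
    (s t : X) :
    kernelPow (fun u v => ENNReal.ofReal (p u v)) n s t = ENNReal.ofReal (kernelPow p n s t) := by
  induction n generalizing s with
  | zero =>
    unfold kernelPow
    split_ifs <;> simp
  | succ n ih =>
    have hsum : Summable fun u => p s u * kernelPow p n u t :=
      summable_of_hasFiniteSupport <|
        (finite_support_kernelPow hcol n t).subset (Function.support_mul_subset_right _ _)
    simp only [kernelPow, ih]
    rw [ENNReal.ofReal_tsum_of_nonneg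
      (fun u => mul_nonneg (hp s u) (kernelPow_nonneg hp n u t)) hsum]
    exact tsum_congr fun u => (ENNReal.ofReal_mul (hp s u)).symm

lemma weightedNorm_kernelPow_le (h : opNormBound m p lam) (hm : ∀ x, 0 ≤ m x) (hlam : 0 ≤ lam)
    (hcol : ∀ t, {s | p s t ≠ 0}.Finite) (n : ℕ) (t : X) :
    weightedNorm m (fun s => kernelPow p n s t) ≤ lam ^ n * √(m t) := by
  induction n with
  | zero =>
    rw [weightedNorm, tsum_eq_single t fun s hs => by simp [kernelPow, hs]]
    simp [kernelPow]
  | succ n ih =>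
    calc weightedNorm m (fun s => kernelPow p (n + 1) s t)
        ≤ lam * weightedNorm m (fun s => kernelPow p n s t) :=
          weightedNorm_kernel_le h hm hlam (finite_support_kernelPow hcol n t)
            (finite_support_kernelPow hcol (n + 1) t)
      _ ≤ lam * (lam ^ n * √(m t)) := by gcongr
      _ = lam ^ (n + 1) * √(m t) := by ring

lemma kernelPow_le_of_opNormBound (h : opNormBound m p lam) (hm : ∀ x, 0 < m x) (hlam : 0 ≤ lam)
    (hcol : ∀ t, {s | p s t ≠ 0}.Finite) (n : ℕ) (s t : X) :
    kernelPow p n s t ≤ lam ^ n * (√(m t) / √(m s)) := by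
  rw [← mul_div_assoc, le_div_iff₀' (Real.sqrt_pos.2 (hm s))]
  calc √(m s) * kernelPow p n s t ≤ √(m s) * |kernelPow p n s t| := by
        gcongr
        exact le_abs_self _
    _ ≤ weightedNorm m (fun s => kernelPow p n s t) :=
        sqrt_mul_abs_le_weightedNorm (fun x => (hm x).le) (finite_support_kernelPow hcol n t) s
    _ ≤ lam ^ n * √(m t) := weightedNorm_kernelPow_le h (fun x => (hm x).le) hlam hcol n t

lemma kernelPow_ofReal_le_of_opNormBound (h : opNormBound m p lam) (hm : ∀ x, 0 < m x)
    (hlam : 0 ≤ lam) (hp : ∀ s t, 0 ≤ p s t) (hcol : ∀ t, {s | p s t ≠ 0}.Finite) (n : ℕ)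
    (s t : X) :
    kernelPow (fun u v => ENNReal.ofReal (p u v)) n s t ≤
      ENNReal.ofReal lam ^ n * ENNReal.ofReal (√(m t) / √(m s)) := by
  rw [kernelPow_ofReal hp hcol, ← ENNReal.ofReal_pow hlam, ← ENNReal.ofReal_mul (pow_nonneg hlam n)]
  exact ENNReal.ofReal_le_ofReal (kernelPow_le_of_opNormBound h hm hlam hcol n s t)

lemma green_lt_top_of_opNormBound (h : opNormBound m p lam) (hm : ∀ x, 0 < m x)
    (hlam : 0 ≤ lam) (hlam1 : lam < 1) (hp : ∀ s t, 0 ≤ p s t)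
    (hcol : ∀ t, {s | p s t ≠ 0}.Finite) (s t : X) :
    green (fun u v => ENNReal.ofReal (p u v)) s t < ⊤ := by
  calc green (fun u v => ENNReal.ofReal (p u v)) s t
      ≤ ∑' n, ENNReal.ofReal lam ^ n * ENNReal.ofReal (√(m t) / √(m s)) :=
        ENNReal.tsum_le_tsum fun n => kernelPow_ofReal_le_of_opNormBound h hm hlam hp hcol n s t
    _ = (1 - ENNReal.ofReal lam)⁻¹ * ENNReal.ofReal (√(m t) / √(m s)) := by
        rw [ENNReal.tsum_mul_right, ENNReal.tsum_geometric]
    _ < ⊤ := by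
        refine ENNReal.mul_lt_top (ENNReal.inv_lt_top.2 (tsub_pos_of_lt ?_)) ENNReal.ofReal_lt_top
        rwa [ENNReal.ofReal_lt_one]

lemma tsum_green_mul_green_le_of_opNormBound (h : opNormBound m p lam) (hm : ∀ x, 0 < m x)
    (hlam : 0 ≤ lam) (hp : ∀ s t, 0 ≤ p s t) (hcol : ∀ t, {s | p s t ≠ 0}.Finite) (v : X) :
    ∑' u, green (fun u v => ENNReal.ofReal (p u v)) v u *
      green (fun u v => ENNReal.ofReal (p u v)) u v ≤ (1 - ENNReal.ofReal lam)⁻¹ ^ 2 := by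
  refine tsum_green_mul_green_le fun n =>
    (kernelPow_ofReal_le_of_opNormBound h hm hlam hp hcol n v v).trans ?_
  rw [div_self (Real.sqrt_pos.2 (hm v)).ne', ENNReal.ofReal_one, mul_one]

end Spectral

section Paths

variable {X : Type*} {Ω : Set X} {a : X → X → ℝ} {n : ℕ}

/-- The restriction to `Ω` of the positive part of a kernel. -/
noncomputable def restrictE (Ω : Set X) (a : X → X → ℝ) (u v : Ω) : ℝ≥0∞ := ENNReal.ofReal (a u v)

/-- A path of `n + 1` steps is its second vertex together with the path from there on. -/
def pathSuccEquiv (n : ℕ) (s : Ω) (t : X) :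
    pathSet Ω (n + 1) s t ≃ (u : Ω) × pathSet Ω n u t where
  toFun σ := ⟨⟨σ.1 1, σ.2.2.2 1⟩, Fin.tail σ.1, rfl, σ.2.2.1, fun i => σ.2.2.2 i.succ⟩
  invFun τ := ⟨Fin.cons (s : X) τ.2.1, rfl, by rw [← Fin.succ_last, Fin.cons_succ, τ.2.2.2.1],
    Fin.cases s.2 fun j => by rw [Fin.cons_succ]; exact τ.2.2.2.2 j⟩
  left_inv := by
    rintro ⟨σ, hs, -⟩
    refine Subtype.ext ?_
    simp only [← hs]
    exact Fin.cons_self_tail σ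
  right_inv := by
    rintro ⟨⟨u, hu⟩, τ, hτ, -⟩
    dsimp only at hτ
    subst hτ
    rfl

lemma tsum_pathSet_zero {R : Type*} [Semiring R] [TopologicalSpace R] (P : Ω → Ω → R) (s t : Ω) :
    ∑' _ : pathSet Ω 0 (s : X) t, (1 : R) = kernelPow P 0 s t := by
  by_cases h : s = t
  · subst h
    have : Unique (pathSet Ω 0 (s : X) s) :=
      ⟨⟨fun _ => s, rfl, rfl, fun _ => s.2⟩,
        fun σ => Subtype.ext (funext fun i => by rw [Fin.fin_one_eq_zero i]; exact σ.2.1)⟩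
    simp [kernelPow, tsum_fintype]
  · have : IsEmpty (pathSet Ω 0 (s : X) t) :=
      ⟨fun σ => h (Subtype.ext (σ.2.1.symm.trans σ.2.2.1))⟩
    rw [tsum_empty, kernelPow, if_neg h]

lemma weightE_symm_pathSuccEquiv {s : Ω} {t : X} (τ : (u : Ω) × pathSet Ω n u t) :
    weightE a (n + 1) ((pathSuccEquiv n s t).symm τ).1 = restrictE Ω a s τ.1 * weightE a n τ.2 := by
  obtain ⟨⟨u, hu⟩, τ, hτ, -⟩ := τ
  dsimp only at hτ
  subst hτ
  exact Fin.prod_univ_succ _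

lemma weightR_symm_pathSuccEquiv {s : Ω} {t : X} (τ : (u : Ω) × pathSet Ω n u t) :
    weightR a (n + 1) ((pathSuccEquiv n s t).symm τ).1 = a s τ.1 * weightR a n τ.2 := by
  obtain ⟨⟨u, hu⟩, τ, hτ, -⟩ := τ
  dsimp only at hτ
  subst hτ
  exact Fin.prod_univ_succ _

lemma nStepE_eq_kernelPow (n : ℕ) (s t : Ω) :
    nStepE Ω a n s t = kernelPow (restrictE Ω a) n s t := by
  induction n generalizing s with
  | zero => exact tsum_pathSet_zero _ s t
  | succ n ih =>
    simp_rw [nStepE, kernelPow, ← ih, nStepE, ← (pathSuccEquiv n s (t : X)).symm.tsum_eq,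
      weightE_symm_pathSuccEquiv, ENNReal.tsum_sigma', ENNReal.tsum_mul_left]

lemma greenE_eq_green (s t : Ω) : greenE Ω a s t = green (restrictE Ω a) s t :=
  tsum_congr fun n => nStepE_eq_kernelPow n s t

lemma enorm_weightR (σ : Fin (n + 1) → X) :
    ‖weightR a n σ‖ₑ = weightE (fun u v => |a u v|) n σ := by
  simp_rw [weightR, weightE, Real.enorm_eq_ofReal_abs, Finset.abs_prod]
  exact ENNReal.ofReal_prod_of_nonneg fun _ _ => abs_nonneg _

lemma nStepR_eq_kernelPow (h : ∀ n (s t : Ω), nStepE Ω (fun u v => |a u v|) n s t ≠ ⊤) (n : ℕ)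
    (s t : Ω) : nStepR Ω a n s t = kernelPow (fun u v : Ω => a u v) n s t := by
  induction n generalizing s with
  | zero => exact tsum_pathSet_zero _ s t
  | succ n ih =>
    have summable : Summable fun σ : pathSet Ω (n + 1) (s : X) t => weightR a (n + 1) σ.1 :=
      .of_enorm (by simp_rw [enorm_weightR]; exact h (n + 1) s t)
    rw [← (pathSuccEquiv n s (t : X)).symm.summable_iff] at summable
    simp only [Function.comp_def, weightR_symm_pathSuccEquiv] at summable
    simp_rw [nStepR, kernelPow, ← ih, nStepR, ← (pathSuccEquiv n s (t : X)).symm.tsum_eq,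
      weightR_symm_pathSuccEquiv, summable.tsum_sigma, tsum_mul_left]

lemma nStepE_mono {a b : X → X → ℝ} (h : ∀ u ∈ Ω, ∀ v ∈ Ω, a u v ≤ b u v) (n : ℕ) (s t : X) :
    nStepE Ω a n s t ≤ nStepE Ω b n s t :=
  ENNReal.tsum_le_tsum fun σ => Finset.prod_le_prod' fun _ _ =>
    ENNReal.ofReal_le_ofReal (h _ (σ.2.2.2 _) _ (σ.2.2.2 _))

lemma toReal_greenE (ha : ∀ s t, 0 ≤ a s t) (hcol : ∀ t : Ω, {s : Ω | a s t ≠ 0}.Finite)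
    (s t : Ω) : (greenE Ω a s t).toReal = ∑' n, kernelPow (fun u v : Ω => a u v) n s t := by
  have pow_eq (n : ℕ) : kernelPow (restrictE Ω a) n s t =
      ENNReal.ofReal (kernelPow (fun u v : Ω => a u v) n s t) :=
    kernelPow_ofReal (fun u v : Ω => ha u v) hcol n s t
  rw [greenE_eq_green, green, ENNReal.tsum_toReal_eq fun n => by simp [pow_eq]]
  exact tsum_congr fun n => by
    rw [pow_eq, ENNReal.toReal_ofReal (kernelPow_nonneg (fun u v : Ω => ha u v) n s t)]

lemma enorm_greenR_sub_toReal_greenE_le {p b : X → X → ℝ} (hp : ∀ s t, 0 ≤ p s t)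
    (hcol : ∀ t : Ω, {s : Ω | p s t ≠ 0}.Finite) (hfin : ∀ s t : Ω, greenE Ω p s t ≠ ⊤)
    (hb : ∀ u ∈ Ω, ∀ v ∈ Ω, |b u v| ≤ p u v) {h : Ω → ℝ≥0∞}
    (hbp : ∀ u v : Ω, ‖b u v - p u v‖ₑ ≤ h u * restrictE Ω p u v) (s t : Ω) :
    ‖greenR Ω b s t - (greenE Ω p s t).toReal‖ₑ ≤
      ∑' u : Ω, h u * (green (restrictE Ω p) s u * green (restrictE Ω p) u t) := by
  have nStepE_ne_top (n : ℕ) (s t : Ω) : nStepE Ω (fun u v => |b u v|) n s t ≠ ⊤ :=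
    ne_top_of_le_ne_top (hfin s t) ((nStepE_mono hb n s t).trans (ENNReal.le_tsum n))
  simp_rw [toReal_greenE hp hcol, greenR, nStepR_eq_kernelPow nStepE_ne_top]
  refine enorm_tsum_kernelPow_sub_le (P := restrictE Ω p) (fun u v => ?_) (fun u v => ?_)
    (by simpa only [greenE_eq_green] using hfin) hbp s t
  · exact (Real.enorm_of_nonneg (hp u v)).le
  · rw [Real.enorm_eq_ofReal_abs]
    exact ENNReal.ofReal_le_ofReal (hb u u.2 v v.2)

end Paths

section Tree

lemma lcpLen_comm (s t : Word) : lcpLen s t = lcpLen t s := by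
  induction s generalizing t with
  | nil => cases t <;> rfl
  | cons a s ih => cases t <;> simp [lcpLen, eq_comm, ih]

lemma lcpLen_le_length_right (s t : Word) : lcpLen s t ≤ t.length := by
  induction s, t using lcpLen.induct <;> simp_all [lcpLen]

lemma take_lcpLen (s t : Word) : s.take (lcpLen s t) = t.take (lcpLen s t) := by
  induction s, t using lcpLen.induct <;> simp_all [lcpLen]

lemma lcsLen_le_length_right (s t : Word) : lcsLen s t ≤ t.length := by
  simpa [lcsLen] using lcpLen_le_length_right s.reverse t.reverse

lemma suffix_of_length_le_lcsLen {s t w : Word} (hw : w <:+ t) (h : w.length ≤ lcsLen s t) :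
    w <:+ s := by
  have hle := lcsLen_le_length_right s t
  rw [← List.reverse_prefix] at hw ⊢
  refine .trans ?_ (List.take_prefix (lcsLen s t) s.reverse)
  rw [lcsLen, take_lcpLen]
  refine List.prefix_of_prefix_length_le hw (List.take_prefix _ _) ?_
  rw [lcsLen] at h hle
  simp only [List.length_reverse, List.length_take]
  lia

lemma treeDist_comm (s t : Word) : treeDist s t = treeDist t s := by
  rw [treeDist, treeDist, lcsLen, lcsLen, lcpLen_comm, add_comm]

lemma length_le_add_treeDist (s t : Word) : s.length ≤ t.length + treeDist s t := by
  have := lcsLen_le_length_right s t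
  rw [treeDist]
  lia

lemma length_lt_of_crossing {w w' y : Word} (hw : ¬ y <:+ w) (hw' : y <:+ w') :
    w'.length < y.length + treeDist w w' := by
  have hlt : lcsLen w w' < y.length := not_le.1 fun h => hw (suffix_of_length_le_lcsLen hw' h)
  have := hw'.length_le
  rw [treeDist]
  lia

lemma exists_maximal_suffix {Q : Word → Prop} {x u : Word} (hx : Q x) (hu : x <:+ u) :
    ∃ v, x <:+ v ∧ v <:+ u ∧ Q v ∧ (v = u ∨ ∃ a, a :: v <:+ u ∧ ¬ Q (a :: v)) := by
  induction u with
  | nil => exact ⟨x, List.suffix_rfl, hu, hx, .inl (List.suffix_nil.1 hu)⟩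
  | cons a u ih =>
    by_cases hQ : Q (a :: u)
    · exact ⟨a :: u, hu, List.suffix_rfl, hQ, .inl rfl⟩
    · have hxu : x <:+ u := (List.suffix_cons_iff.1 hu).resolve_left fun h => hQ (h ▸ hx)
      obtain ⟨v, hxv, hvu, hv, rfl | ⟨c, hc, hcQ⟩⟩ := ih hxu
      · exact ⟨v, hxv, List.suffix_cons a v, hv, .inr ⟨a, List.suffix_rfl, hQ⟩⟩
      · exact ⟨v, hxv, hvu.trans (List.suffix_cons a u), hv,
          .inr ⟨c, hc.trans (List.suffix_cons a u), hcQ⟩⟩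

lemma H1.finite_setOf_ne_zero {p : Word → Word → ℝ} {S : ℕ} (h : H1 p S) (t : Word) :
    {s | p s t ≠ 0}.Finite := by
  refine (List.finite_length_le Bool (t.length + S)).subset fun s hs => ?_
  have hdist : treeDist s t ≤ S := not_lt.1 fun hlt => hs (h s t hlt)
  have := length_le_add_treeDist s t
  exact this.trans (by lia)

end Tree

section Branch

variable {x : Word} {P : Delta x → Delta x → ℝ≥0∞} {S : ℕ} {ε M : ℝ≥0∞}

/-- Kernels on a branch of the tree whose range, Green kernel and lower bounds for the Green kernel
at range `S` are controlled by constants that do not depend on the branch. -/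
structure IsUniform (P : Delta x → Delta x → ℝ≥0∞) (S : ℕ) (ε M : ℝ≥0∞) : Prop where
  treeDist_le : ∀ s t, P s t ≠ 0 → treeDist s t ≤ S
  ne_zero : ε ≠ 0
  ne_top : ε ≠ ⊤
  le_green : ∀ y v : Delta x, v.1 <:+ y.1 → y.1.length ≤ v.1.length + S →
    ε ≤ green P y v ∧ ε ≤ green P v y
  tsum_green_mul_green_le : ∀ v, ∑' u, green P v u * green P u v ≤ M

/-- The word `r v`, as an element of a branch containing `v`. -/
def Delta.append (r : Word) (v : Delta x) : Delta x :=
  ⟨r ++ v.1, v.2.trans (List.suffix_append r v.1)⟩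

/-- The elements of `Δ_y` at distance less than `S` from `y`. -/
noncomputable def layer (S : ℕ) (y : Delta x) : Finset (Delta x) :=
  (List.finite_length_lt Bool S).toFinset.image fun r => Delta.append r y

lemma mem_layer {y w : Delta x} :
    w ∈ layer S y ↔ y.1 <:+ w.1 ∧ w.1.length < y.1.length + S := by
  simp only [layer, Finset.mem_image, Set.Finite.mem_toFinset]
  constructor
  · rintro ⟨r, hr, rfl⟩
    refine ⟨List.suffix_append r y.1, ?_⟩
    rw [Delta.append, List.length_append, add_comm]
    exact Nat.add_lt_add_left hr _
  · rintro ⟨⟨r, hr⟩, hlen⟩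
    refine ⟨r, ?_, Subtype.ext hr⟩
    rw [← hr, List.length_append, add_comm] at hlen
    exact Nat.lt_of_add_lt_add_left hlen

/-- The constant of Ancona's inequality `G(s,u) ≤ c G(s,v) G(v,u)` for `v` between `s` and `u`. -/
noncomputable def anconaConst (S : ℕ) (ε M : ℝ≥0∞) : ℝ≥0∞ :=
  1 + (List.finite_length_lt Bool S).toFinset.card * (M / ε) ^ 2

lemma IsUniform.green_self_le (hP : IsUniform P S ε M) (v : Delta x) : green P v v ≤ M :=
  calc green P v v
      ≤ green P v v * green P v v := le_mul_of_one_le_left zero_le (one_le_green_self v)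
    _ ≤ ∑' u, green P v u * green P u v :=
        ENNReal.le_tsum (f := fun u => green P v u * green P u v) v
    _ ≤ M := hP.tsum_green_mul_green_le v

lemma IsUniform.sum_layer_le (hP : IsUniform P S ε M) {v y : Delta x} {a : Bool}
    (hy : y.1 = a :: v.1) (s t : Delta x) :
    ∑ w ∈ layer S y, green P s w * green P w t ≤
      anconaConst S ε M * (green P s v * green P v t) := by
  have near : ∀ w ∈ layer S y, ε ≤ green P w v ∧ ε ≤ green P v w := fun w hw => by
    obtain ⟨hyw, hlen⟩ := mem_layer.1 hw
    rw [hy, List.length_cons] at hlen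
    rw [hy] at hyw
    exact hP.le_green w v ((List.suffix_cons a _).trans hyw) (by lia)
  refine (sum_green_mul_green_le hP.ne_zero hP.ne_top (fun w _ => hP.green_self_le w) near
    s t).trans ?_
  gcongr
  exact le_trans (by gcongr; exact Finset.card_image_le) le_add_self

lemma IsUniform.green_le_of_enters (hP : IsUniform P S ε M) {v y s u : Delta x} {a : Bool}
    (hy : y.1 = a :: v.1) (hs : ¬ y.1 <:+ s.1) (hu : y.1 <:+ u.1) :
    green P s u ≤ anconaConst S ε M * (green P s v * green P v u) :=
  (green_le_sum_of_forall_entrance_mem (D := {w : Delta x | y.1 <:+ w.1})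
    (fun w hw w' hw' hww' => mem_layer.2 <| .intro hw' <| (length_lt_of_crossing hw hw').trans_le <|
      Nat.add_le_add_left (hP.treeDist_le w w' hww') _) hs hu).trans (hP.sum_layer_le hy s u)

lemma IsUniform.green_le_of_exits (hP : IsUniform P S ε M) {v y u t : Delta x} {a : Bool}
    (hy : y.1 = a :: v.1) (hu : y.1 <:+ u.1) (ht : ¬ y.1 <:+ t.1) :
    green P u t ≤ anconaConst S ε M * (green P u v * green P v t) :=
  (green_le_sum_of_forall_exit_mem (D := {w : Delta x | y.1 <:+ w.1})
    (fun w hw w' hw' hww' => mem_layer.2 <| .intro hw <| (length_lt_of_crossing hw' hw).trans_le <|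
      Nat.add_le_add_left (treeDist_comm w.1 w'.1 ▸ hP.treeDist_le w w' hww') _) hu ht).trans
    (hP.sum_layer_le hy u t)

lemma IsUniform.exists_green_le_anconaConst_mul (hP : IsUniform P S ε M) (s u t : Delta x) :
    ∃ v : Delta x, v.1 <:+ u.1 ∧ (v.1 <:+ s.1 ∨ v.1 <:+ t.1) ∧
      green P s u ≤ anconaConst S ε M * (green P s v * green P v u) ∧
      green P u t ≤ anconaConst S ε M * (green P u v * green P v t) := by
  obtain ⟨v, hxv, hvu, hv, hmax⟩ :=
    exists_maximal_suffix (Q := fun v => v <:+ s.1 ∨ v <:+ t.1) (.inl s.2) u.2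
  refine ⟨⟨v, hxv⟩, hvu, hv, ?_⟩
  rcases hmax with rfl | ⟨a, hau, ha⟩
  · have hc : 1 ≤ anconaConst S ε M := le_self_add
    constructor
    · exact (le_mul_of_one_le_right zero_le (one_le_green_self u)).trans
        (le_mul_of_one_le_left zero_le hc)
    · exact (le_mul_of_one_le_left zero_le (one_le_green_self u)).trans
        (le_mul_of_one_le_left zero_le hc)
  · rw [not_or] at ha
    have hay : a :: v ∈ Delta x := hxv.trans (List.suffix_cons a v)
    exact ⟨hP.green_le_of_enters (y := ⟨a :: v, hay⟩) rfl ha.1 hau,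
      hP.green_le_of_exits (y := ⟨a :: v, hay⟩) rfl hau ha.2⟩

lemma IsUniform.exists_green_mul_green_le (hP : IsUniform P S ε M) (s u t : Delta x) :
    ∃ v : Delta x, v.1 <:+ u.1 ∧ (v.1 <:+ s.1 ∨ v.1 <:+ t.1) ∧
      green P s u * green P u t ≤
        anconaConst S ε M ^ 2 * M * green P s t * (green P v u * green P u v) := by
  obtain ⟨v, hvu, hv, hsu, hut⟩ := hP.exists_green_le_anconaConst_mul s u t
  refine ⟨v, hvu, hv, ?_⟩
  set c := anconaConst S ε M
  calc green P s u * green P u t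
      ≤ c * (green P s v * green P v u) * (c * (green P u v * green P v t)) := mul_le_mul' hsu hut
    _ = c ^ 2 * (green P s v * green P v t) * (green P v u * green P u v) := by ring
    _ ≤ c ^ 2 * (M * green P s t) * (green P v u * green P u v) := by
        gcongr c ^ 2 * ?_ * _
        exact (green_mul_green_le s v t).trans (mul_le_mul' (hP.green_self_le v) le_rfl)
    _ = c ^ 2 * M * green P s t * (green P v u * green P u v) := by rw [mul_assoc _ M]

lemma tsum_pow_length_suffix_le (Q : ℝ≥0∞) (w : Word) :
    ∑' v : {v : Delta x // v.1 <:+ w}, Q ^ v.1.1.length ≤ Q ^ x.length * (1 - Q)⁻¹ := by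
  have split (v : {v : Delta x // v.1 <:+ w}) :
      x.length + (v.1.1.length - x.length) = v.1.1.length :=
    Nat.add_sub_cancel' v.1.2.length_le
  have injective : Function.Injective
      fun v : {v : Delta x // v.1 <:+ w} => v.1.1.length - x.length := fun v v' h => by
    refine Subtype.ext (Subtype.ext ((List.suffix_of_suffix_length_le v.2 v'.2 ?_).eq_of_length ?_))
    all_goals have := split v; have := split v'; lia
  calc ∑' v : {v : Delta x // v.1 <:+ w}, Q ^ v.1.1.length
      = Q ^ x.length * ∑' v : {v : Delta x // v.1 <:+ w}, Q ^ (v.1.1.length - x.length) := by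
        simp_rw [← ENNReal.tsum_mul_left, ← pow_add, split]
    _ ≤ Q ^ x.length * ∑' n, Q ^ n := by
        gcongr
        exact ENNReal.tsum_comp_le_tsum_of_injective injective (Q ^ ·)
    _ = Q ^ x.length * (1 - Q)⁻¹ := by rw [ENNReal.tsum_geometric]

lemma IsUniform.tsum_pow_mul_green_mul_green_le (hP : IsUniform P S ε M) {Q : ℝ≥0∞} (hQ : Q ≤ 1)
    (s t : Delta x) :
    ∑' u : Delta x, Q ^ u.1.length * (green P s u * green P u t) ≤
      2 * anconaConst S ε M ^ 2 * M ^ 2 * (1 - Q)⁻¹ * Q ^ x.length * green P s t := by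
  set A := anconaConst S ε M ^ 2 * M * green P s t
  let F (v u : Delta x) : ℝ≥0∞ := Q ^ v.1.length * (A * (green P v u * green P u v))
  have pointwise (u : Delta x) : Q ^ u.1.length * (green P s u * green P u t) ≤
      ∑' v : {v : Delta x // v.1 <:+ s.1}, F v u + ∑' v : {v : Delta x // v.1 <:+ t.1}, F v u := by
    obtain ⟨v, hvu, hv, hle⟩ := hP.exists_green_mul_green_le s u t
    have hF : Q ^ u.1.length * (green P s u * green P u t) ≤ F v u :=
      mul_le_mul' (pow_le_pow_right_of_le_one' hQ hvu.length_le) hle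
    rcases hv with hv | hv
    · exact (hF.trans (ENNReal.le_tsum (f := fun v : {v : Delta x // v.1 <:+ s.1} => F v u)
        ⟨v, hv⟩)).trans le_self_add
    · exact (hF.trans (ENNReal.le_tsum (f := fun v : {v : Delta x // v.1 <:+ t.1} => F v u)
        ⟨v, hv⟩)).trans le_add_self
  have sum_suffixes (w : Word) : ∑' (u : Delta x) (v : {v : Delta x // v.1 <:+ w}), F v u ≤
      Q ^ x.length * (1 - Q)⁻¹ * (A * M) := by
    rw [ENNReal.tsum_comm]
    simp_rw [F, ENNReal.tsum_mul_left]
    calc ∑' v : {v : Delta x // v.1 <:+ w}, Q ^ v.1.1.length *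
          (A * ∑' u, green P v u * green P u v)
        ≤ ∑' v : {v : Delta x // v.1 <:+ w}, Q ^ v.1.1.length * (A * M) := by
          gcongr with v
          exact hP.tsum_green_mul_green_le v
      _ ≤ Q ^ x.length * (1 - Q)⁻¹ * (A * M) := by
          rw [ENNReal.tsum_mul_right]
          gcongr
          exact tsum_pow_length_suffix_le Q w
  calc ∑' u : Delta x, Q ^ u.1.length * (green P s u * green P u t)
      ≤ Q ^ x.length * (1 - Q)⁻¹ * (A * M) + Q ^ x.length * (1 - Q)⁻¹ * (A * M) := by
        refine (ENNReal.tsum_le_tsum pointwise).trans ?_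
        rw [ENNReal.tsum_add]
        exact add_le_add (sum_suffixes s) (sum_suffixes t)
    _ = 2 * anconaConst S ε M ^ 2 * M ^ 2 * (1 - Q)⁻¹ * Q ^ x.length * green P s t := by
        simp only [A]
        ring

end Branch

section Constants

variable {p b : Word → Word → ℝ} {q δ₀ lam C : ℝ} {S K : ℕ} {x z : Word}

lemma H3.exists_pow_le_kernelPow (h : H3 p δ₀ K) (hδ : δ₀ ≤ 1) {s t : Word}
    (hst : treeDist s t = 1) (v : Delta x) :
    ∃ n, ENNReal.ofReal δ₀ ^ K ≤
      kernelPow (restrictE (Delta x) p) n (Delta.append s v) (Delta.append t v) := by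
  obtain ⟨k, hk, u, rfl, rfl, hu⟩ := h s t hst
  refine ⟨k, (pow_le_pow_right_of_le_one' (ENNReal.ofReal_le_one.2 hδ) hk).trans ?_⟩
  exact pow_le_kernelPow (w := fun i => Delta.append (u i) v) fun i hi =>
    ENNReal.ofReal_le_ofReal (hu i hi v)

lemma H3.pow_le_green_append (h : H3 p δ₀ K) (hδ : δ₀ ≤ 1) (r : Word) (v : Delta x) :
    ENNReal.ofReal δ₀ ^ (K * r.length) ≤ green (restrictE (Delta x) p) (Delta.append r v) v ∧
      ENNReal.ofReal δ₀ ^ (K * r.length) ≤ green (restrictE (Delta x) p) v (Delta.append r v) := by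
  suffices (∃ n, ENNReal.ofReal δ₀ ^ (K * r.length) ≤
        kernelPow (restrictE (Delta x) p) n (Delta.append r v) v) ∧
      ∃ n, ENNReal.ofReal δ₀ ^ (K * r.length) ≤
        kernelPow (restrictE (Delta x) p) n v (Delta.append r v) from
    this.imp (fun ⟨n, hn⟩ => hn.trans (kernelPow_le_green n _ _))
      fun ⟨n, hn⟩ => hn.trans (kernelPow_le_green n _ _)
  induction r with
  | nil => exact ⟨⟨0, by simp [kernelPow, Delta.append]⟩, 0, by simp [kernelPow, Delta.append]⟩
  | cons a r ih =>
    obtain ⟨⟨n, hn⟩, n', hn'⟩ := ih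
    obtain ⟨k, hk⟩ := h.exists_pow_le_kernelPow hδ (s := [a]) (t := [])
      (by cases a <;> decide) (Delta.append r v)
    obtain ⟨k', hk'⟩ := h.exists_pow_le_kernelPow hδ (s := []) (t := [a])
      (by cases a <;> decide) (Delta.append r v)
    rw [List.length_cons, Nat.mul_succ, pow_add]
    refine ⟨⟨k + n, ?_⟩, n' + k', ?_⟩
    · rw [mul_comm]
      exact (mul_le_mul' hk hn).trans (kernelPow_mul_kernelPow_le k n _ _ _)
    · exact (mul_le_mul' hn' hk').trans (kernelPow_mul_kernelPow_le n' k' _ _ _)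

lemma finite_setOf_restrict_ne_zero (h : H1 p S) (t : Delta x) :
    {s : Delta x | p s t ≠ 0}.Finite :=
  (h.finite_setOf_ne_zero t).preimage Subtype.val_injective.injOn

lemma H4.greenE_lt_top {m : Word → ℝ} (hp : ∀ s t, 0 ≤ p s t) (h1 : H1 p S) (h4 : H4 p m lam)
    (hlam : lam ∈ Set.Ico (0 : ℝ) 1) (s t : Delta x) : greenE (Delta x) p s t < ⊤ := by
  rw [greenE_eq_green]
  exact green_lt_top_of_opNormBound (h4.2.comp_injective Subtype.val_injective)
    (fun v => h4.1 v.1) hlam.1 hlam.2 (fun u v => hp u v) (finite_setOf_restrict_ne_zero h1) s t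

lemma isUniform_restrictE {m : Word → ℝ} (hp : ∀ s t, 0 ≤ p s t) (h1 : H1 p S) (h3 : H3 p δ₀ K)
    (h4 : H4 p m lam) (hδ : δ₀ ∈ Set.Ioc (0 : ℝ) 1) (hlam : 0 ≤ lam) (x : Word) :
    IsUniform (restrictE (Delta x) p) S (ENNReal.ofReal δ₀ ^ (K * S))
      ((1 - ENNReal.ofReal lam)⁻¹ ^ 2) where
  treeDist_le s t hst := not_lt.1 fun hlt =>
    hst (by rw [restrictE, h1 s t hlt, ENNReal.ofReal_zero])
  ne_zero := pow_ne_zero _ (ENNReal.ofReal_pos.2 hδ.1).ne'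
  ne_top := ENNReal.pow_ne_top ENNReal.ofReal_ne_top
  le_green y v hvy hlen := by
    obtain ⟨r, hr⟩ := hvy
    obtain rfl : Delta.append r v = y := Subtype.ext hr
    rw [← hr, List.length_append, add_comm] at hlen
    have hpow := pow_le_pow_right_of_le_one' (ENNReal.ofReal_le_one.2 hδ.2)
      (Nat.mul_le_mul_left K (Nat.le_of_add_le_add_left hlen))
    exact (h3.pow_le_green_append hδ.2 r v).imp hpow.trans hpow.trans
  tsum_green_mul_green_le :=
    tsum_green_mul_green_le_of_opNormBound (h4.2.comp_injective Subtype.val_injective)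
      (fun v => h4.1 v.1) hlam (fun u v => hp u v) (finite_setOf_restrict_ne_zero h1)

lemma Perturb.abs_le (h : Perturb p b z q C) (hx : x ∈ Delta z) :
    ∀ u ∈ Delta x, ∀ v ∈ Delta x, |b u v| ≤ p u v :=
  fun u hu v hv => (h u v (hx.trans hu) (hx.trans hv)).1

lemma Perturb.enorm_sub_le (h : Perturb p b z q C) (h2 : H2 p δ₀) (hδ : 0 < δ₀) (hq : 0 ≤ q)
    (hC : 0 ≤ C) (hx : x ∈ Delta z) (u v : Delta x) :
    ‖b u v - p u v‖ₑ ≤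
      ENNReal.ofReal (C / δ₀) * ENNReal.ofReal q ^ u.1.length * restrictE (Delta x) p u v := by
  obtain ⟨hb, hbp⟩ := h u v (hx.trans u.2) (hx.trans v.2)
  have hp : 0 ≤ p u v := (abs_nonneg _).trans hb
  rw [restrictE, ← ENNReal.ofReal_pow hq, ← ENNReal.ofReal_mul (by positivity),
    ← ENNReal.ofReal_mul (by positivity), Real.enorm_eq_ofReal_abs]
  refine ENNReal.ofReal_le_ofReal ?_
  rcases hp.eq_or_lt with hp0 | hpos
  · rw [← hp0, abs_nonpos_iff] at hb
    simp [hb, ← hp0]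
  · calc |b u v - p u v| ≤ C * q ^ u.1.length := hbp
      _ = C / δ₀ * q ^ u.1.length * δ₀ := by field_simp
      _ ≤ C / δ₀ * q ^ u.1.length * p u v := by
        gcongr
        exact h2 u v hpos

/-- The relative error, per factor `q ^ |x|`, caused in the Green kernel of `Δ_x` by a
`q`-perturbation. -/
noncomputable def perturbConst (q : ℝ) (S : ℕ) (δ₀ : ℝ) (K : ℕ) (lam C : ℝ) : ℝ≥0∞ :=
  let M := (1 - ENNReal.ofReal lam)⁻¹ ^ 2
  ENNReal.ofReal (C / δ₀) * (2 * anconaConst S (ENNReal.ofReal δ₀ ^ (K * S)) M ^ 2 * M ^ 2 *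
    (1 - ENNReal.ofReal q)⁻¹)

lemma inv_one_sub_ofReal_ne_top {r : ℝ} (hr : r < 1) : (1 - ENNReal.ofReal r)⁻¹ ≠ ⊤ :=
  ENNReal.inv_ne_top.2 (tsub_pos_of_lt (ENNReal.ofReal_lt_one.2 hr)).ne'

lemma anconaConst_ne_top {ε M : ℝ≥0∞} (hε : ε ≠ 0) (hM : M ≠ ⊤) : anconaConst S ε M ≠ ⊤ := by
  rw [anconaConst]
  finiteness

lemma perturbConst_ne_top (hq : q < 1) (hδ : 0 < δ₀) (hlam : lam < 1) :
    perturbConst q S δ₀ K lam C ≠ ⊤ := by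
  have hM : (1 - ENNReal.ofReal lam)⁻¹ ≠ ⊤ := inv_one_sub_ofReal_ne_top hlam
  have hQ : (1 - ENNReal.ofReal q)⁻¹ ≠ ⊤ := inv_one_sub_ofReal_ne_top hq
  have hA := anconaConst_ne_top (S := S) (pow_ne_zero (K * S) (ENNReal.ofReal_pos.2 hδ).ne')
    (ENNReal.pow_ne_top (n := 2) hM)
  unfold perturbConst
  finiteness

lemma Perturb.enorm_greenR_sub_le {m : Word → ℝ} (hp : ∀ s t, 0 ≤ p s t) (h1 : H1 p S)
    (h2 : H2 p δ₀) (h3 : H3 p δ₀ K) (h4 : H4 p m lam) (h : Perturb p b z q C)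
    (hδ : δ₀ ∈ Set.Ioc (0 : ℝ) 1) (hlam : lam ∈ Set.Ico (0 : ℝ) 1) (hq : q ∈ Set.Icc (0 : ℝ) 1)
    (hC : 0 ≤ C) (hx : x ∈ Delta z) (s t : Delta x) :
    ‖greenR (Delta x) b s t - (greenE (Delta x) p s t).toReal‖ₑ ≤
      perturbConst q S δ₀ K lam C * ENNReal.ofReal q ^ x.length * greenE (Delta x) p s t := by
  refine (enorm_greenR_sub_toReal_greenE_le hp (finite_setOf_restrict_ne_zero h1)
    (fun s t => (h4.greenE_lt_top hp h1 hlam s t).ne) (h.abs_le hx)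
    (h.enorm_sub_le h2 hδ.1 hq.1 hC hx) s t).trans ?_
  simp_rw [mul_assoc (ENNReal.ofReal (C / δ₀)), ENNReal.tsum_mul_left, perturbConst, mul_assoc,
    greenE_eq_green]
  gcongr ENNReal.ofReal (C / δ₀) * ?_
  simpa only [mul_assoc] using (isUniform_restrictE hp h1 h3 h4 hδ hlam.1
    x).tsum_pow_mul_green_mul_green_le (ENNReal.ofReal_le_one.2 hq.2) s t

end Constants

/-- Lemma 4.4: for `p` satisfying (H1)–(H4) and `b` a `q`-perturbation of `p` on `Δ_z`,
there is a constant `C₂` (depending only on `q`, `S`, `δ₀`, `K`, `λ` and `C`) such that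
`|G_{b,Δ_x}(s,t) − G_{p,Δ_x}(s,t)| ≤ C₂ q^{|x|} G_{p,Δ_x}(s,t)` for all `x ∈ Δ_z` and
`s,t ∈ Δ_x`, the Green series of `b` on `Δ_x` being absolutely convergent. -/
theorem lem_4_4 (q : ℝ) (hq : q ∈ Set.Ioo (0 : ℝ) 1) (S : ℕ)
    (δ₀ : ℝ) (hδ₀ : δ₀ ∈ Set.Ioo (0 : ℝ) 1) (K : ℕ)
    (lam : ℝ) (hlam : lam ∈ Set.Ioo (0 : ℝ) 1) (C : ℝ) (hC : 0 < C) :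
    ∃ C₂ > (0 : ℝ), ∀ p : Word → Word → ℝ, (∀ s t, 0 ≤ p s t) →
      H1 p S → H2 p δ₀ → H3 p δ₀ K → ∀ m : Word → ℝ, H4 p m lam →
      ∀ z : Word, ∀ b : Word → Word → ℝ, Perturb p b z q C →
      ∀ x ∈ Delta z, ∀ s ∈ Delta x, ∀ t ∈ Delta x,
        greenAbs (Delta x) b s t < ⊤ ∧
        greenE (Delta x) p s t < ⊤ ∧
        |greenR (Delta x) b s t - (greenE (Delta x) p s t).toReal| ≤
          C₂ * q ^ x.length * (greenE (Delta x) p s t).toReal := by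
  set c := perturbConst q S δ₀ K lam C
  have hc : c ≠ ⊤ := perturbConst_ne_top hq.2 hδ₀.1 hlam.2
  refine ⟨c.toReal + 1, by positivity, fun p hp h1 h2 h3 m h4 z b hb x hx s hs t ht => ?_⟩
  set G := greenE (Delta x) p s t
  have hG : G < ⊤ := h4.greenE_lt_top hp h1 (Set.Ioo_subset_Ico_self hlam) ⟨s, hs⟩ ⟨t, ht⟩
  have hbG : greenAbs (Delta x) b s t ≤ G :=
    ENNReal.tsum_le_tsum fun n => nStepE_mono (hb.abs_le hx) n s t
  refine ⟨hbG.trans_lt hG, hG, ?_⟩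
  have error : ‖greenR (Delta x) b s t - G.toReal‖ₑ ≤ c * ENNReal.ofReal q ^ x.length * G :=
    hb.enorm_greenR_sub_le hp h1 h2 h3 h4 (Set.Ioo_subset_Ioc_self hδ₀)
      (Set.Ioo_subset_Ico_self hlam) (Set.Ioo_subset_Icc_self hq) hC.le hx ⟨s, hs⟩ ⟨t, ht⟩
  calc |greenR (Delta x) b s t - G.toReal|
      ≤ (c * ENNReal.ofReal q ^ x.length * G).toReal := by
        rw [← Real.norm_eq_abs, ← toReal_enorm]
        exact ENNReal.toReal_mono (by finiteness) error
    _ = c.toReal * q ^ x.length * G.toReal := by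
        simp only [ENNReal.toReal_mul, ENNReal.toReal_pow, ENNReal.toReal_ofReal hq.1.le]
    _ ≤ (c.toReal + 1) * q ^ x.length * G.toReal := by
        have := hq.1.le
        gcongr
        exact le_add_of_nonneg_right zero_le_one

end Paper
end

section
/- Fix q ∈ (0,1) and let μ be a finitely supported probability measure on I with μ(e) < 1. Set m(x) = dim_q(x)² and λ = Σ_r μ(r)·dim(r)/dim_q(r). Then λ < 1, and the operator (Pf)(s) = Σ_t p_μ(s,t)·f(t), defined on finitely supported functions, extends to a bounded operator on ℓ²(I,m) of norm at most λ. (Lemma 4.1 of the paper, first part.) -/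
open scoped ENNReal

namespace Paper

/-!
Both dimensions of a word are products, over its maximal alternating blocks, of a sequence `U` with
`U 0 = 1` and `U (n + 2) = U 1 * U (n + 1) - U n`. Peeling off the last letter of `r` and the first
letter of `s` shows that this recurrence forces `∑ₜ mᵗ_{r,s} dim t = dim r * dim s`, and Frobenius
reciprocity `mᵗ_{r,s} = mˢ_{r̄,t}` turns it into `∑ₛ mᵗ_{r,s} dim s = dim r * dim t`. Hence
`dim / dim_q` is an eigenfunction, with eigenvalue `λ`, of both `P` and its adjoint with respect to
the weight `m`, and the Schur test with this function bounds the norm of `P` by `λ`. Finally `λ < 1`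
because `n + 1 < [n + 1]_q` for `n ≥ 1`.
-/

/-- The product `∏ U(|x_i|)` over the maximal alternating blocks `x_i` of `x`, for an arbitrary
sequence `U`; the two dimensions are the cases `U n = n + 1` and `U n = [n + 1]_q`. -/
def blockProd {R : Type*} [CommMonoid R] (U : ℕ → R) (x : Word) : R :=
  ((blockLens x).map U).prod

/-- The recurrence satisfied by the (rescaled) Chebyshev polynomials of the second kind at a fixed
argument `U 1`. It makes `blockProd U` multiplicative for the fusion rules. -/
structure IsChebyshev {R : Type*} [CommRing R] (U : ℕ → R) : Prop where
  zero : U 0 = 1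
  add_two : ∀ n, U (n + 2) = U 1 * U (n + 1) - U n

/-- The words `z` that may be cancelled between `r` and `s` so that `t` remains; `fuse r s t` is
their number. -/
def cancellations (r s t : Word) : Set Word :=
  {z | ∃ r₀ s₀ : Word, r = r₀ ++ z ∧ s = bar z ++ s₀ ∧ t = r₀ ++ s₀}

section Blocks

theorem exists_blockLens_cons (a : Bool) (x : Word) : ∃ k l, blockLens (a :: x) = k :: l := by
  rcases x with _ | ⟨b, x⟩
  · exact ⟨1, [], rfl⟩
  · rw [blockLens]
    split
    · exact ⟨_, _, rfl⟩
    · split_ifs <;> exact ⟨_, _, rfl⟩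

theorem blockLens_eq_nil_iff {x : Word} : blockLens x = [] ↔ x = [] := by
  rcases x with _ | ⟨a, x⟩
  · simp [blockLens]
  · obtain ⟨k, l, h⟩ := exists_blockLens_cons a x
    simp [h]

theorem blockLens_cons_cons {a b : Bool} {x : Word} {k : ℕ} {l : List ℕ}
    (h : blockLens (b :: x) = k :: l) :
    blockLens (a :: b :: x) = if a = b then 1 :: k :: l else (k + 1) :: l := by
  rw [blockLens, h]

theorem one_le_of_mem_blockLens : ∀ {x : Word} {k : ℕ}, k ∈ blockLens x → 1 ≤ k
  | [], _, hk => by simp [blockLens] at hk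
  | [_], _, hk => by simp_all [blockLens]
  | a :: b :: x, k, hk => by
    obtain ⟨j, l, h⟩ := exists_blockLens_cons b x
    have ih : ∀ i ∈ j :: l, 1 ≤ i := fun i hi => one_le_of_mem_blockLens (x := b :: x) (h ▸ hi)
    rw [blockLens_cons_cons h] at hk
    grind

variable {R : Type*}

@[simp]
theorem blockProd_nil [CommMonoid R] (U : ℕ → R) : blockProd U [] = 1 := rfl

@[simp]
theorem blockProd_singleton [CommMonoid R] (U : ℕ → R) (a : Bool) : blockProd U [a] = U 1 := by
  simp [blockProd, blockLens]

theorem blockProd_pos {U : ℕ → ℝ} (hU : ∀ k, 1 ≤ k → 0 < U k) (x : Word) : 0 < blockProd U x :=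
  List.prod_pos <| by
    simpa using fun k hk => hU k (one_le_of_mem_blockLens hk)

theorem blockProd_lt_blockProd {U V : ℕ → ℝ} (hU : ∀ k, 1 ≤ k → 0 < U k)
    (hUV : ∀ k, 1 ≤ k → U k < V k) {x : Word} (hx : x ≠ []) : blockProd U x < blockProd V x :=
  List.prod_map_lt_prod_map (blockLens_eq_nil_iff.not.2 hx) U V
    (fun k hk => hU k (one_le_of_mem_blockLens hk))
    (fun k hk => hUV k (one_le_of_mem_blockLens hk))

end Blocks

namespace IsChebyshev

variable {R : Type*} [CommRing R] {U : ℕ → R}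

theorem blockProd_cons_cons (hU : IsChebyshev U) (a b : Bool) (x : Word) :
    blockProd U (a :: b :: x) =
      U 1 * blockProd U (b :: x) - if a = b then 0 else blockProd U x := by
  have two : U 2 = U 1 * U 1 - 1 := by rw [hU.add_two 0, hU.zero]
  rcases x with _ | ⟨c, x⟩
  · by_cases hab : a = b <;> simp [blockProd, blockLens, hab, two]
  · obtain ⟨k, l, h⟩ := exists_blockLens_cons c x
    have hb := blockLens_cons_cons (a := b) h
    rcases eq_or_ne b c with rfl | hbc
    · rw [if_pos rfl] at hb
      by_cases hab : a = b <;>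
        simp only [blockProd, blockLens_cons_cons hb, hb, h, hab, if_true, if_false,
          List.map_cons, List.prod_cons, two] <;> ring
    · rw [if_neg hbc] at hb
      by_cases hab : a = b <;>
        simp only [blockProd, blockLens_cons_cons hb, hb, h, hab, if_true, if_false,
          List.map_cons, List.prod_cons, hU.add_two k] <;> ring

/-- A continuant identity: the words `x ++ [a]` and `b :: y` are glued with a correction term only
if the junction `a`, `b` merges two blocks. -/
theorem blockProd_append (hU : IsChebyshev U) (a b : Bool) (y : Word) : ∀ x : Word,
    blockProd U (x ++ a :: b :: y) =
      blockProd U (x ++ [a]) * blockProd U (b :: y) -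
        if a = b then 0 else blockProd U x * blockProd U y
  | [] => by simp [hU.blockProd_cons_cons]
  | [c] => by
    simp only [List.cons_append, List.nil_append, hU.blockProd_cons_cons, blockProd_singleton,
      blockProd_nil]
    split_ifs <;> ring
  | c :: d :: x => by
    have hdx := hU.blockProd_append a b y (d :: x)
    have hx := hU.blockProd_append a b y x
    simp only [List.cons_append] at hdx hx ⊢
    simp only [hU.blockProd_cons_cons c d, hdx, hx]
    split_ifs <;> ring

theorem blockProd_bar (hU : IsChebyshev U) : ∀ x : Word, blockProd U (bar x) = blockProd U x
  | [] => rfl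
  | [a] => by simp [bar]
  | a :: b :: x => by
    have hbx : bar (b :: x) = bar x ++ [!b] := by simp [bar]
    have habx : bar (a :: b :: x) = bar x ++ (!b) :: [!a] := by simp [bar]
    rw [habx, hU.blockProd_append, ← hbx, hU.blockProd_bar (b :: x), hU.blockProd_bar x,
      hU.blockProd_cons_cons a b x]
    simp [mul_comm, eq_comm]

theorem add_one_le_and_add_one_lt {U : ℕ → ℝ} (hU : IsChebyshev U) (h2 : 2 < U 1) (n : ℕ) :
    (n : ℝ) + 1 ≤ U n ∧ U n + 1 < U (n + 1) := by
  induction n with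
  | zero => exact ⟨by simp [hU.zero], by rw [hU.zero]; linarith⟩
  | succ n ih =>
    obtain ⟨hle, hlt⟩ := ih
    have hpos : 0 < U (n + 1) := by linarith [n.cast_nonneg (α := ℝ)]
    refine ⟨by push_cast; linarith, ?_⟩
    calc U (n + 1) + 1 < 2 * U (n + 1) - U n := by linarith
      _ < U 1 * U (n + 1) - U n := by gcongr
      _ = U (n + 2) := (hU.add_two n).symm

theorem add_one_lt {U : ℕ → ℝ} (hU : IsChebyshev U) (h2 : 2 < U 1) {n : ℕ} (hn : 1 ≤ n) :
    (n : ℝ) + 1 < U n := by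
  obtain ⟨n, rfl⟩ := Nat.exists_eq_add_of_le' hn
  obtain ⟨hle, hlt⟩ := hU.add_one_le_and_add_one_lt h2 n
  push_cast
  linarith

end IsChebyshev

section Dimensions

theorem isChebyshev_add_one (R : Type*) [CommRing R] : IsChebyshev fun n : ℕ => (n : R) + 1 where
  zero := by simp
  add_two n := by push_cast; ring

theorem qInt_two {q : ℝ} (hqq : q⁻¹ ≠ q) : qInt q 2 = q⁻¹ + q := by
  rw [qInt, div_eq_iff (sub_ne_zero.2 hqq)]
  simp only [zpow_neg, zpow_natCast]
  ring

theorem isChebyshev_qInt_succ {q : ℝ} (hq : q ≠ 0) (hqq : q⁻¹ ≠ q) :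
    IsChebyshev fun n => qInt q (n + 1) where
  zero := by simp [qInt, sub_ne_zero.2 hqq]
  add_two n := by
    have hinv : q⁻¹ * q = 1 := inv_mul_cancel₀ hq
    simp only [Nat.reduceAdd, qInt_two hqq]
    simp only [qInt, zpow_neg, zpow_natCast, ← inv_pow]
    rw [mul_div_assoc', div_sub_div_same]
    congr 1
    linear_combination (q ^ (n + 1) - q⁻¹ ^ (n + 1)) * hinv

-- In the definition of `dimn` the coercion to `ℝ` is applied to the list of block lengths.
theorem dimn_eq_blockProd (x : Word) : dimn x = blockProd (fun n : ℕ => (n : ℝ) + 1) x := by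
  simp [dimn, blockProd, ← List.map_eq_flatMap, Function.comp_def]

theorem dimn_pos (x : Word) : 0 < dimn x := by
  rw [dimn_eq_blockProd]
  exact blockProd_pos (fun _ _ => by positivity) x

theorem dimn_bar (x : Word) : dimn (bar x) = dimn x := by
  simpa only [dimn_eq_blockProd] using (isChebyshev_add_one ℝ).blockProd_bar x

variable {q : ℝ}

theorem dimn_lt_dimq (hq : 0 < q) (hq1 : q ≠ 1) {x : Word} (hx : x ≠ []) :
    dimn x < dimq q x := by
  have hqq : q⁻¹ ≠ q := by
    rw [ne_eq, inv_eq_self₀]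
    rintro (h | h | h) <;> [linarith; linarith; exact hq1 h]
  have two_lt : 2 < q⁻¹ + q := by
    have hsq : 0 < (q - 1) ^ 2 / q := div_pos (sq_pos_of_ne_zero (sub_ne_zero.2 hq1)) hq
    have expand : (q - 1) ^ 2 / q = q⁻¹ + q - 2 := by field
    linarith
  rw [dimn_eq_blockProd]
  refine blockProd_lt_blockProd (fun k _ => by positivity) (fun k hk => ?_) hx
  exact (isChebyshev_qInt_succ hq.ne' hqq).add_one_lt (by rwa [qInt_two hqq]) hk

theorem dimn_le_dimq (hq : 0 < q) (hq1 : q ≠ 1) (x : Word) : dimn x ≤ dimq q x := by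
  rcases eq_or_ne x [] with rfl | hx
  · simp [dimn, dimq, blockLens]
  · exact (dimn_lt_dimq hq hq1 hx).le

theorem dimq_pos (hq : 0 < q) (hq1 : q ≠ 1) (x : Word) : 0 < dimq q x :=
  (dimn_pos x).trans_le (dimn_le_dimq hq hq1 x)

end Dimensions

section Fusion

theorem bar_involutive : Function.Involutive bar := fun x => by simp [bar, Function.comp_def]

theorem bar_append (x y : Word) : bar (x ++ y) = bar y ++ bar x := by simp [bar]

theorem bar_concat (x : Word) (a : Bool) : bar (x ++ [a]) = (!a) :: bar x := by simp [bar]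

theorem cancellations_finite (r s t : Word) : (cancellations r s t).Finite :=
  r.tails.finite_toSet.subset fun z ⟨r₀, _, hr, _⟩ => by
    simpa using ⟨r₀, hr.symm⟩

theorem nil_mem_cancellations {r s t : Word} : [] ∈ cancellations r s t ↔ t = r ++ s := by
  simp [cancellations, bar]

theorem concat_mem_cancellations {r s t z : Word} {a b c : Bool} :
    z ++ [c] ∈ cancellations (r ++ [a]) (b :: s) t ↔
      c = a ∧ a ≠ b ∧ z ∈ cancellations r s t := by
  constructor
  · rintro ⟨r₀, s₀, hr, hs, ht⟩
    rw [← List.append_assoc] at hr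
    obtain ⟨rfl, hac⟩ := List.append_inj' hr rfl
    obtain rfl := List.singleton_inj.1 hac
    rw [bar_concat, List.cons_append, List.cons.injEq] at hs
    exact ⟨rfl, by simp [hs.1], r₀, s₀, rfl, hs.2, ht⟩
  · rintro ⟨rfl, hab, r₀, s₀, rfl, rfl, rfl⟩
    have hb : b = !c := Bool.eq_not.2 hab.symm
    exact ⟨r₀, s₀, (List.append_assoc ..), by rw [bar_concat, hb, List.cons_append], rfl⟩

theorem fuse_eq_ncard (r s t : Word) : fuse r s t = (cancellations r s t).ncard := rfl

theorem ncard_setOf_eq_and {α : Type*} (a : α) (P : Prop) [Decidable P] :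
    {x | x = a ∧ P}.ncard = if P then 1 else 0 := by
  split_ifs with hP <;> simp [hP]

theorem fuse_nil_left (s t : Word) : fuse [] s t = if t = s then 1 else 0 := by
  have only_nil : cancellations [] s t = {z | z = [] ∧ t = s} := by
    ext z
    constructor
    · rintro ⟨r₀, s₀, hr, rfl, rfl⟩
      obtain ⟨rfl, rfl⟩ := List.append_eq_nil_iff.1 hr.symm
      exact ⟨rfl, rfl⟩
    · rintro ⟨rfl, rfl⟩
      exact nil_mem_cancellations.2 rfl
  rw [fuse_eq_ncard, only_nil, ncard_setOf_eq_and]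

theorem fuse_nil_right (r t : Word) : fuse r [] t = if t = r then 1 else 0 := by
  have only_nil : cancellations r [] t = {z | z = [] ∧ t = r} := by
    ext z
    constructor
    · rintro ⟨r₀, s₀, rfl, hs, rfl⟩
      obtain ⟨hz, rfl⟩ := List.append_eq_nil_iff.1 hs.symm
      obtain rfl : z = [] := bar_involutive.injective hz
      exact ⟨rfl, by simp⟩
    · rintro ⟨rfl, rfl⟩
      exact nil_mem_cancellations.2 (List.append_nil _).symm
  rw [fuse_eq_ncard, only_nil, ncard_setOf_eq_and]

theorem fuse_concat_cons (r s t : Word) (a b : Bool) :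
    fuse (r ++ [a]) (b :: s) t =
      (if t = r ++ a :: b :: s then 1 else 0) + if a = b then 0 else fuse r s t := by
  have union : cancellations (r ++ [a]) (b :: s) t =
      {z | z = [] ∧ t = r ++ a :: b :: s} ∪
        (· ++ [a]) '' {z | a ≠ b ∧ z ∈ cancellations r s t} := by
    ext z
    rcases List.eq_nil_or_concat' z with rfl | ⟨z, c, rfl⟩
    · simp [nil_mem_cancellations]
    · constructor
      · rw [concat_mem_cancellations]
        rintro ⟨rfl, hz⟩
        exact Or.inr ⟨z, hz, rfl⟩
      · rintro (⟨hnil, -⟩ | ⟨z', ⟨hab, hz'⟩, h⟩)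
        · simp at hnil
        · obtain ⟨rfl, hac⟩ := List.append_inj' h rfl
          exact concat_mem_cancellations.2 ⟨(List.singleton_inj.1 hac).symm, hab, hz'⟩
  have disjoint : Disjoint {z : Word | z = [] ∧ t = r ++ a :: b :: s}
      ((· ++ [a]) '' {z | a ≠ b ∧ z ∈ cancellations r s t}) := by
    rw [Set.disjoint_left]
    rintro _ ⟨rfl, -⟩ ⟨z, -, hz⟩
    simp at hz
  rw [fuse_eq_ncard, union, Set.ncard_union_eq disjoint
      ((Set.finite_singleton []).subset fun _ h => h.1)
      (((cancellations_finite r s t).subset fun _ h => h.2).image _),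
    Set.ncard_image_of_injective _ (List.append_left_injective [a]), ncard_setOf_eq_and]
  congr 1
  split_ifs with hab <;> simp [hab, fuse_eq_ncard]

/-- Half of Frobenius reciprocity: if `r = r₀ z`, `s = z̄ s₀` and `t = r₀ s₀`, then cancelling `r̄₀`
between `r̄ = z̄ r̄₀` and `t` leaves `s`. -/
theorem fuse_le_fuse_bar (r s t : Word) : fuse r s t ≤ fuse (bar r) t s := by
  have rdrop_eq {z r₀ : Word} (h : r = r₀ ++ z) : r.rdrop z.length = r₀ := by
    simp [h, List.rdrop]
  refine Set.ncard_le_ncard_of_injOn (s := cancellations r s t) (t := cancellations (bar r) t s)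
    (fun z => bar (r.rdrop z.length)) ?_ ?_ (cancellations_finite _ _ _)
  · rintro z ⟨r₀, s₀, hr, hs, ht⟩
    simp only [rdrop_eq hr]
    exact ⟨bar z, s₀, by rw [hr, bar_append], by rw [bar_involutive, ht], hs⟩
  · rintro z ⟨r₀, s₀, hr, -⟩ z' ⟨r₀', s₀', hr', -⟩ h
    simp only [rdrop_eq hr, rdrop_eq hr'] at h
    obtain rfl := bar_involutive.injective h
    exact List.append_cancel_left (hr.symm.trans hr')

theorem fuse_bar (r s t : Word) : fuse (bar r) t s = fuse r s t :=
  le_antisymm (by simpa only [bar_involutive r] using fuse_le_fuse_bar (bar r) t s)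
    (fuse_le_fuse_bar r s t)

theorem IsChebyshev.hasSum_fuse_mul_blockProd {R : Type*} [CommRing R] [TopologicalSpace R]
    [ContinuousAdd R] {U : ℕ → R} (hU : IsChebyshev U) (r s : Word) :
    HasSum (fun t => (fuse r s t : R) * blockProd U t) (blockProd U r * blockProd U s) := by
  have hasSum_ite (x : Word) :
      HasSum (fun t => if t = x then blockProd U t else 0) (blockProd U x) := by
    simpa using hasSum_single (f := fun t => if t = x then blockProd U t else 0) x
      fun t ht => if_neg ht
  induction r using List.reverseRecOn generalizing s with
  | nil => simpa [fuse_nil_left] using hasSum_ite s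
  | append_singleton r a ih =>
    rcases s with _ | ⟨b, s⟩
    · simpa [fuse_nil_right] using hasSum_ite (r ++ [a])
    · have cancelled : HasSum (fun t => if a = b then 0 else (fuse r s t : R) * blockProd U t)
          (if a = b then 0 else blockProd U r * blockProd U s) := by
        split_ifs
        exacts [hasSum_zero, ih s]
      have fuse_mul (t : Word) : (fuse (r ++ [a]) (b :: s) t : R) * blockProd U t =
          (if t = r ++ a :: b :: s then blockProd U t else 0) +
            if a = b then 0 else (fuse r s t : R) * blockProd U t := by
        rw [fuse_concat_cons]
        split_ifs <;> push_cast <;> ring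
      simpa only [fuse_mul, hU.blockProd_append, sub_add_cancel] using
        (hasSum_ite (r ++ a :: b :: s)).add cancelled

theorem hasSum_fuse_mul_dimn (r s : Word) :
    HasSum (fun t => (fuse r s t : ℝ) * dimn t) (dimn r * dimn s) := by
  simpa only [dimn_eq_blockProd] using (isChebyshev_add_one ℝ).hasSum_fuse_mul_blockProd r s

theorem hasSum_fuse_mul_dimn_left (r t : Word) :
    HasSum (fun s => (fuse r s t : ℝ) * dimn s) (dimn r * dimn t) := by
  simpa only [fuse_bar, dimn_bar] using hasSum_fuse_mul_dimn (bar r) t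

end Fusion

section Schur

/-- The Schur test: apply the Cauchy–Schwarz inequality after splitting `b s t * g s * f t` as the
geometric mean of `b s t * v t * (g s ^ 2 / u s)` and `b s t * u s * (f t ^ 2 / v t)`. -/
theorem sq_sum_sum_le_of_schur {ι κ : Type*} {S : Finset ι} {T : Finset κ} {b : ι → κ → ℝ}
    {u m : ι → ℝ} {v n : κ → ℝ} (hb : ∀ s t, 0 ≤ b s t) (hu : ∀ s, 0 < u s) (hv : ∀ t, 0 < v t)
    (row : ∀ s ∈ S, ∑ t ∈ T, b s t * v t ≤ m s * u s)
    (col : ∀ t ∈ T, ∑ s ∈ S, b s t * u s ≤ n t * v t) (g : ι → ℝ) (f : κ → ℝ) :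
    (∑ s ∈ S, ∑ t ∈ T, b s t * g s * f t) ^ 2 ≤
      (∑ s ∈ S, m s * g s ^ 2) * ∑ t ∈ T, n t * f t ^ 2 := by
  have hg : ∑ s ∈ S, ∑ t ∈ T, b s t * v t * (g s ^ 2 / u s) ≤ ∑ s ∈ S, m s * g s ^ 2 := by
    refine Finset.sum_le_sum fun s hs => ?_
    have hus := hu s
    calc ∑ t ∈ T, b s t * v t * (g s ^ 2 / u s)
        = (∑ t ∈ T, b s t * v t) * (g s ^ 2 / u s) := (Finset.sum_mul ..).symm
      _ ≤ m s * u s * (g s ^ 2 / u s) := by gcongr; exact row s hs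
      _ = m s * g s ^ 2 := by field_simp
  have hf : ∑ s ∈ S, ∑ t ∈ T, b s t * u s * (f t ^ 2 / v t) ≤ ∑ t ∈ T, n t * f t ^ 2 := by
    rw [Finset.sum_comm]
    refine Finset.sum_le_sum fun t ht => ?_
    have hvt := hv t
    calc ∑ s ∈ S, b s t * u s * (f t ^ 2 / v t)
        = (∑ s ∈ S, b s t * u s) * (f t ^ 2 / v t) := (Finset.sum_mul ..).symm
      _ ≤ n t * v t * (f t ^ 2 / v t) := by gcongr; exact col t ht
      _ = n t * f t ^ 2 := by field_simp
  have cauchySchwarz : (∑ s ∈ S, ∑ t ∈ T, b s t * g s * f t) ^ 2 ≤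
      (∑ s ∈ S, ∑ t ∈ T, b s t * v t * (g s ^ 2 / u s)) *
        ∑ s ∈ S, ∑ t ∈ T, b s t * u s * (f t ^ 2 / v t) := by
    simp only [← Finset.sum_product']
    refine Finset.sum_sq_le_sum_mul_sum_of_sq_le_mul _ ?_ ?_ ?_ <;> rintro ⟨s, t⟩ - <;>
      have := hb s t <;> have := hu s <;> have := hv t
    · positivity
    · positivity
    · exact le_of_eq (by field)
  refine cauchySchwarz.trans (mul_le_mul hg hf ?_ (le_trans ?_ hg)) <;>
    refine Finset.sum_nonneg fun s _ => Finset.sum_nonneg fun t _ => ?_ <;>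
    have := hb s t <;> have := hu s <;> have := hv t <;> positivity

theorem opNormBound_of_schur {X : Type*} {m : X → ℝ} {p : X → X → ℝ} {h : X → ℝ} {C : ℝ}
    (hm : ∀ x, 0 ≤ m x) (hp : ∀ s t, 0 ≤ p s t) (hh : ∀ x, 0 < h x) (hC : 0 ≤ C)
    (row : ∀ (T : Finset X) (s : X), ∑ t ∈ T, p s t * h t ≤ C * h s)
    (col : ∀ (S : Finset X) (t : X), ∑ s ∈ S, m s * p s t * h s ≤ C * m t * h t) :
    opNormBound m p C := by
  intro f g hf hg
  have tsum_mul_f (k : X → ℝ) : ∑' t, k t * f t = ∑ t ∈ hf.toFinset, k t * f t :=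
    tsum_eq_sum fun t ht => by simp_all
  have tsum_f_sq : ∑' t, m t * f t ^ 2 = ∑ t ∈ hf.toFinset, m t * f t ^ 2 :=
    tsum_eq_sum fun t ht => by simp_all
  have tsum_g_sq : ∑' s, m s * g s ^ 2 = ∑ s ∈ hg.toFinset, m s * g s ^ 2 :=
    tsum_eq_sum fun s hs => by simp_all
  have form_eq : ∑' s, m s * g s * ∑' t, p s t * f t =
      ∑ s ∈ hg.toFinset, ∑ t ∈ hf.toFinset, m s * p s t * g s * f t := by
    rw [tsum_eq_sum (s := hg.toFinset) fun s hs => by simp_all]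
    refine Finset.sum_congr rfl fun s _ => ?_
    rw [tsum_mul_f, Finset.mul_sum]
    exact Finset.sum_congr rfl fun t _ => by ring
  have hf0 : 0 ≤ ∑ t ∈ hf.toFinset, m t * f t ^ 2 :=
    Finset.sum_nonneg fun t _ => mul_nonneg (hm t) (sq_nonneg _)
  have hg0 : 0 ≤ ∑ s ∈ hg.toFinset, m s * g s ^ 2 :=
    Finset.sum_nonneg fun s _ => mul_nonneg (hm s) (sq_nonneg _)
  rw [form_eq, tsum_f_sq, tsum_g_sq]
  refine abs_le_of_sq_le_sq ?_ (by positivity)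
  calc (∑ s ∈ hg.toFinset, ∑ t ∈ hf.toFinset, m s * p s t * g s * f t) ^ 2
      ≤ (∑ s ∈ hg.toFinset, C * m s * g s ^ 2) * ∑ t ∈ hf.toFinset, C * m t * f t ^ 2 :=
        sq_sum_sum_le_of_schur (fun s t => mul_nonneg (hm s) (hp s t)) hh hh
          (fun s _ => by
            simpa only [mul_assoc, mul_left_comm C, ← Finset.mul_sum] using
              mul_le_mul_of_nonneg_left (row hf.toFinset s) (hm s))
          (fun t _ => col hg.toFinset t) g f
    _ = (C * √(∑ t ∈ hf.toFinset, m t * f t ^ 2) * √(∑ s ∈ hg.toFinset, m s * g s ^ 2)) ^ 2 := by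
        simp only [mul_pow, Real.sq_sqrt hf0, Real.sq_sqrt hg0, mul_assoc, ← Finset.mul_sum]
        ring

end Schur

theorem sum_tsum_mul_le {ι κ : Type*} {c d : ι → ℝ} {k : ι → κ → ℝ} {w : κ → ℝ} {D : ℝ}
    (hc : ∀ r, 0 ≤ c r) (hk : ∀ r t, 0 ≤ k r t) (hw : ∀ t, 0 ≤ w t)
    (hcd : Summable fun r => c r * d r) (hsum : ∀ r, HasSum (fun t => k r t * w t) (d r * D))
    (T : Finset κ) : ∑ t ∈ T, (∑' r, c r * k r t) * w t ≤ (∑' r, c r * d r) * D := by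
  have hkw (r : ι) (t : κ) : 0 ≤ k r t * w t := mul_nonneg (hk r t) (hw t)
  have hcdD : Summable fun r => c r * (d r * D) := by
    simpa only [mul_assoc] using hcd.mul_right D
  have summable (t : κ) : Summable fun r => c r * (k r t * w t) :=
    .of_nonneg_of_le (fun r => mul_nonneg (hc r) (hkw r t))
      (fun r => mul_le_mul_of_nonneg_left (le_hasSum (hsum r) t fun t' _ => hkw r t') (hc r)) hcdD
  calc ∑ t ∈ T, (∑' r, c r * k r t) * w t
      = ∑' r, ∑ t ∈ T, c r * (k r t * w t) := by
        simp only [← tsum_mul_right, mul_assoc]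
        exact (Summable.tsum_finsetSum fun t _ => summable t).symm
    _ ≤ ∑' r, c r * (d r * D) := by
        refine Summable.tsum_le_tsum (fun r => ?_) (summable_sum fun t _ => summable t) hcdD
        rw [← Finset.mul_sum]
        exact mul_le_mul_of_nonneg_left
          (sum_le_hasSum T (fun t _ => hkw r t) (hsum r)) (hc r)
    _ = (∑' r, c r * d r) * D := by simp only [← mul_assoc, tsum_mul_right]

section Kernel

variable {q : ℝ} {μ : Word → ℝ}

theorem pMu_eq (q : ℝ) (μ : Word → ℝ) (s t : Word) :
    pMu q μ s t = (∑' r, μ r / dimq q r * fuse r s t) * (dimq q t / dimq q s) := by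
  rw [pMu, ← tsum_mul_right]
  exact tsum_congr fun r => by field

theorem mul_dimn_div_dimq_le (hq : 0 < q) (hq1 : q ≠ 1) (hμ : ∀ x, 0 ≤ μ x) (r : Word) :
    μ r * dimn r / dimq q r ≤ μ r := by
  rw [mul_div_assoc]
  exact mul_le_of_le_one_right (hμ r)
    (div_le_one_of_le₀ (dimn_le_dimq hq hq1 r) (dimq_pos hq hq1 r).le)

theorem summable_mul_dimn_div_dimq (hq : 0 < q) (hq1 : q ≠ 1) (hμ : ∀ x, 0 ≤ μ x)
    (hsum : Summable μ) : Summable fun r => μ r * dimn r / dimq q r :=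
  hsum.of_nonneg_of_le
    (fun r => div_nonneg (mul_nonneg (hμ r) (dimn_pos r).le) (dimq_pos hq hq1 r).le)
    (mul_dimn_div_dimq_le hq hq1 hμ)

theorem tsum_mul_dimn_div_dimq_lt_one (hq : 0 < q) (hq1 : q ≠ 1) (hμ : ∀ x, 0 ≤ μ x)
    (hsum : HasSum μ 1) (hμe : μ [] < 1) : ∑' r, μ r * dimn r / dimq q r < 1 := by
  obtain ⟨r, hr, hμr⟩ : ∃ r, r ≠ [] ∧ μ r ≠ 0 := by
    by_contra! h
    exact hμe.ne ((hasSum_single [] h).unique hsum)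
  rw [← hsum.tsum_eq]
  refine Summable.tsum_lt_tsum (i := r) (mul_dimn_div_dimq_le hq hq1 hμ) ?_
    (summable_mul_dimn_div_dimq hq hq1 hμ hsum.summable) hsum.summable
  rw [mul_div_assoc]
  exact mul_lt_of_lt_one_right ((hμ r).lt_of_ne' hμr)
    ((div_lt_one (dimq_pos hq hq1 r)).2 (dimn_lt_dimq hq hq1 hr))

theorem pMu_nonneg (hq : 0 < q) (hq1 : q ≠ 1) (hμ : ∀ x, 0 ≤ μ x) (s t : Word) :
    0 ≤ pMu q μ s t :=
  tsum_nonneg fun r => by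
    have hd := dimq_pos hq hq1
    exact div_nonneg (mul_nonneg (mul_nonneg (hμ r) (fuse r s t).cast_nonneg) (hd t).le)
      (mul_pos (hd r) (hd s)).le

theorem sum_pMu_mul_le (hq : 0 < q) (hq1 : q ≠ 1) (hμ : ∀ x, 0 ≤ μ x) (hsum : Summable μ)
    (T : Finset Word) (s : Word) :
    ∑ t ∈ T, pMu q μ s t * (dimn t / dimq q t) ≤
      (∑' r, μ r * dimn r / dimq q r) * (dimn s / dimq q s) := by
  have hd := dimq_pos hq hq1
  have mixture := sum_tsum_mul_le (fun r => div_nonneg (hμ r) (hd r).le)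
    (fun r t => (fuse r s t).cast_nonneg) (fun t => (dimn_pos t).le)
    (by simpa only [div_mul_eq_mul_div] using summable_mul_dimn_div_dimq hq hq1 hμ hsum)
    (fun r => hasSum_fuse_mul_dimn r s) T
  calc ∑ t ∈ T, pMu q μ s t * (dimn t / dimq q t)
      = (∑ t ∈ T, (∑' r, μ r / dimq q r * fuse r s t) * dimn t) / dimq q s := by
        rw [Finset.sum_div]
        refine Finset.sum_congr rfl fun t _ => ?_
        have := (hd t).ne'
        rw [pMu_eq]
        field
    _ ≤ (∑' r, μ r / dimq q r * dimn r) * dimn s / dimq q s :=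
        div_le_div_of_nonneg_right mixture (hd s).le
    _ = (∑' r, μ r * dimn r / dimq q r) * (dimn s / dimq q s) := by
        simp only [div_mul_eq_mul_div, mul_div_assoc]

theorem sum_sq_mul_pMu_mul_le (hq : 0 < q) (hq1 : q ≠ 1) (hμ : ∀ x, 0 ≤ μ x)
    (hsum : Summable μ) (S : Finset Word) (t : Word) :
    ∑ s ∈ S, dimq q s ^ 2 * pMu q μ s t * (dimn s / dimq q s) ≤
      (∑' r, μ r * dimn r / dimq q r) * dimq q t ^ 2 * (dimn t / dimq q t) := by
  have hd := dimq_pos hq hq1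
  have mixture := sum_tsum_mul_le (fun r => div_nonneg (hμ r) (hd r).le)
    (fun r s => (fuse r s t).cast_nonneg) (fun s => (dimn_pos s).le)
    (by simpa only [div_mul_eq_mul_div] using summable_mul_dimn_div_dimq hq hq1 hμ hsum)
    (fun r => hasSum_fuse_mul_dimn_left r t) S
  calc ∑ s ∈ S, dimq q s ^ 2 * pMu q μ s t * (dimn s / dimq q s)
      = dimq q t * ∑ s ∈ S, (∑' r, μ r / dimq q r * fuse r s t) * dimn s := by
        rw [Finset.mul_sum]
        refine Finset.sum_congr rfl fun s _ => ?_
        have := (hd s).ne'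
        rw [pMu_eq]
        field
    _ ≤ dimq q t * ((∑' r, μ r / dimq q r * dimn r) * dimn t) :=
        mul_le_mul_of_nonneg_left mixture (hd t).le
    _ = (∑' r, μ r * dimn r / dimq q r) * dimq q t ^ 2 * (dimn t / dimq q t) := by
        have := (hd t).ne'
        simp only [div_mul_eq_mul_div]
        field

theorem opNormBound_pMu (hq : 0 < q) (hq1 : q ≠ 1) (hμ : ∀ x, 0 ≤ μ x) (hsum : Summable μ) :
    opNormBound (fun x => dimq q x ^ 2) (pMu q μ) (∑' r, μ r * dimn r / dimq q r) :=
  opNormBound_of_schur (h := fun x => dimn x / dimq q x) (fun _ => sq_nonneg _)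
    (pMu_nonneg hq hq1 hμ) (fun x => div_pos (dimn_pos x) (dimq_pos hq hq1 x))
    (tsum_nonneg fun r => div_nonneg (mul_nonneg (hμ r) (dimn_pos r).le) (dimq_pos hq hq1 r).le)
    (sum_pMu_mul_le hq hq1 hμ hsum) (sum_sq_mul_pMu_mul_le hq hq1 hμ hsum)

end Kernel

theorem lem_4_1a_general {q : ℝ} (hq : 0 < q) (hq1 : q ≠ 1) {μ : Word → ℝ} (hμ : ∀ x, 0 ≤ μ x)
    (hsum : HasSum μ 1) (hμe : μ [] < 1) :
    (∑' r, μ r * dimn r / dimq q r) < 1 ∧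
    opNormBound (fun x => dimq q x ^ 2) (pMu q μ) (∑' r, μ r * dimn r / dimq q r) :=
  ⟨tsum_mul_dimn_div_dimq_lt_one hq hq1 hμ hsum hμe, opNormBound_pMu hq hq1 hμ hsum.summable⟩

/-- Lemma 4.1, first part: with `m(x) = dim_q(x)²` and `λ = Σ_r μ(r) dim(r)/dim_q(r)`,
one has `λ < 1` and the Markov operator of `p_μ` is bounded of norm at most `λ`
on `ℓ²(I,m)`. -/
theorem lem_4_1a (q : ℝ) (hq : q ∈ Set.Ioo (0 : ℝ) 1) (μ : Word → ℝ)
    (hμ : IsProbMeasure μ) (hμe : μ [] < 1) :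
    (∑' r, μ r * dimn r / dimq q r) < 1 ∧
    opNormBound (fun x => dimq q x ^ 2) (pMu q μ) (∑' r, μ r * dimn r / dimq q r) := by
  obtain ⟨hμ0, hfin, hsum⟩ := hμ
  exact lem_4_1a_general hq.1 hq.2.ne hμ0 (hsum ▸ (summable_of_hasFiniteSupport hfin).hasSum) hμe

end Paper
end
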